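/- arXiv:0909.1828 — 2 statements merged into one kernel-verified Lean document; each statement's English description precedes it below -/
import Mathlib

section
/- Let d ≥ 1 and f : D^d → C be holomorphic with |f| ≤ 1 on the open unit polydisk D^d. Then the kernel K(z,ζ) = (1 - f(z)·conj(f(ζ)))/∏_{j=1}^d (1 - z_j·conj(ζ_j)) is positive semi-definite on D^d. -/
open Complex Finset ComplexOrder

/-- A kernel `K` is positive semi-definite on a subset `D`. -/
def IsPSDKernelOn {γ : Type*} (D : Set γ) (K : γ → γ → ℂ) : Prop :=
  ∀ (m : ℕ) (z : Fin m → γ), (∀ i, z i ∈ D) → ∀ c : Fin m → ℂ,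
    0 ≤ ∑ i, ∑ j, c i * (starRingEnd ℂ) (c j) * K (z i) (z j)

/-- The open unit polydisk in `ℂ^d`. -/
def Polydisk (d : ℕ) : Set (Fin d → ℂ) := {z | ∀ j, ‖z j‖ < 1}

/-- The standard parametrization of the unit torus. -/
noncomputable def stdTorus (d : ℕ) : (Fin d → ℝ) → (Fin d → ℂ) := torusMap 0 (fun _ => 1)

/-- The Szegő kernel of the polydisk. -/
noncomputable def szego {d : ℕ} (w z : Fin d → ℂ) : ℂ :=
  ∏ j, (1 - z j * (starRingEnd ℂ) (w j))⁻¹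

/-- Complex differentiability at each point of the closed polydisk. -/
def HolCl {d : ℕ} (G : (Fin d → ℂ) → ℂ) : Prop :=
  ∀ z : Fin d → ℂ, (∀ j, ‖z j‖ ≤ 1) → DifferentiableAt ℂ G z

lemma stdTorus_norm {d : ℕ} (θ : Fin d → ℝ) (j : Fin d) : ‖stdTorus d θ j‖ = 1 := by
  simp [stdTorus, torusMap, Complex.norm_exp_ofReal_mul_I]

lemma stdTorus_continuous (d : ℕ) : Continuous (stdTorus d) := by
  unfold stdTorus torusMap
  fun_prop

lemma HolCl.continuous_torus {d : ℕ} {G : (Fin d → ℂ) → ℂ} (hG : HolCl G) :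
    Continuous (fun θ => G (stdTorus d θ)) := by
  rw [continuous_iff_continuousAt]
  intro θ
  exact ContinuousAt.comp (f := stdTorus d) (g := G)
    (hG _ (fun j => (stdTorus_norm θ j).le)).continuousAt
    (stdTorus_continuous d).continuousAt

lemma sub_ne_zero_of_norms {a b : ℂ} (ha : ‖a‖ = 1) (hb : ‖b‖ < 1) : a - b ≠ 0 := by
  intro h
  rw [sub_eq_zero] at h
  rw [h] at ha
  linarith

lemma one_sub_mul_conj_ne_zero {a b : ℂ} (ha : ‖a‖ ≤ 1) (hb : ‖b‖ < 1) :
    1 - a * (starRingEnd ℂ) b ≠ 0 := by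
  intro h
  have h1 : a * (starRingEnd ℂ) b = 1 := (sub_eq_zero.mp h).symm
  have h2 : ‖a‖ * ‖b‖ = 1 := by
    have := congrArg norm h1
    simpa using this
  nlinarith [norm_nonneg a, norm_nonneg b]

lemma torus_cauchy : ∀ (d : ℕ) (w : Fin d → ℂ) (_ : ∀ j, ‖w j‖ < 1)
    (G : (Fin d → ℂ) → ℂ) (_ : HolCl G),
    torusIntegral (fun ζ => (∏ j, (ζ j - w j)⁻¹) * G ζ) 0 (fun _ => 1)
      = (2 * Real.pi * I) ^ d * G w := by
  intro d
  induction d with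
  | zero =>
    intro w hw G hG
    rw [torusIntegral_dim0]
    simp [Subsingleton.elim (0 : Fin 0 → ℂ) w]
  | succ n ih =>
    intro w hw G hG
    have hint : TorusIntegrable (fun ζ : Fin (n+1) → ℂ => (∏ j, (ζ j - w j)⁻¹) * G ζ) 0
        (fun _ => 1) := by
      refine Continuous.integrableOn_Icc ?_
      change Continuous (fun θ => (∏ j, (stdTorus (n+1) θ j - w j)⁻¹) * G (stdTorus (n+1) θ))
      refine Continuous.mul ?_ hG.continuous_torus
      refine continuous_finsetProd _ (fun j _ => ?_)
      refine Continuous.inv₀ ?_ (fun θ => sub_ne_zero_of_norms (stdTorus_norm θ j) (hw j))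
      exact ((continuous_apply j).comp (stdTorus_continuous _)).sub continuous_const
    have hcons : ∀ x : ℂ, ‖x‖ ≤ 1 → ∀ y : Fin n → ℂ, (∀ j, ‖y j‖ ≤ 1) →
        DifferentiableAt ℂ G (Fin.cons x y : Fin (n+1) → ℂ) := by
      intro x hx y hy
      apply hG
      intro j
      refine Fin.cases ?_ (fun j => ?_) j
      · simpa using hx
      · simpa using hy j
    rw [torusIntegral_succ hint]
    have inner : ∀ x : ℂ, ‖x‖ ≤ 1 →
        torusIntegral (fun y : Fin n → ℂ => (∏ j, ((Fin.cons x y : Fin (n+1) → ℂ) j - w j)⁻¹)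
          * G (Fin.cons x y)) 0 (fun _ => 1)
        = (x - w 0)⁻¹ • ((2 * Real.pi * I) ^ n * G (Fin.cons x (fun j => w j.succ))) := by
      intro x hx
      have h1 := ih (fun j => w j.succ) (fun j => hw _) (fun y => G (Fin.cons x y)) (by
        intro y hy
        refine DifferentiableAt.comp y (g := G)
          (f := fun y : Fin n → ℂ => (Fin.cons x y : Fin (n+1) → ℂ)) (hcons x hx y hy) ?_
        rw [differentiableAt_pi]
        intro j
        refine Fin.cases ?_ (fun j => ?_) j
        · simp
        · simp only [Fin.cons_succ]; fun_prop)
      rw [smul_eq_mul, ← h1, ← torusIntegral_const_mul]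
      congr 1
      funext y
      simp only [Fin.prod_univ_succ, Fin.cons_zero, Fin.cons_succ, mul_assoc]
    have h0 : ((0 : Fin (n+1) → ℂ) ∘ Fin.succ) = 0 := rfl
    have h1 : ((fun _ : Fin (n+1) => (1:ℝ)) ∘ Fin.succ) = fun _ => 1 := rfl
    rw [h0, h1]
    rw [circleIntegral.integral_congr (g := fun x => (x - w 0)⁻¹ •
      ((2 * Real.pi * I) ^ n * G (Fin.cons x (fun j => w j.succ)))) zero_le_one
      (fun x hx => inner x (by simpa using (mem_sphere_zero_iff_norm.mp hx).le))]
    rw [DifferentiableOn.circleIntegral_sub_inv_smul]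
    · have : (Fin.cons (w 0) (fun j : Fin n => w j.succ) : Fin (n+1) → ℂ) = w :=
        Fin.cons_self_tail w
      rw [this, smul_eq_mul]; ring
    · intro x hx
      apply DifferentiableAt.differentiableWithinAt
      refine DifferentiableAt.const_mul ?_ _
      refine DifferentiableAt.comp x (g := G)
          (f := fun x : ℂ => (Fin.cons x (fun j => w j.succ) : Fin (n+1) → ℂ))
          (hcons x (by simpa using hx) _ (fun j => (hw _).le)) ?_
      rw [differentiableAt_pi]
      intro j
      refine Fin.cases ?_ (fun j => ?_) j
      · simp
      · simp
    · simpa using hw 0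

lemma szego_holCl {d : ℕ} (w : Fin d → ℂ) (hw : ∀ j, ‖w j‖ < 1) : HolCl (szego w) := by
  intro z hz
  unfold szego
  have : ∀ j ∈ (Finset.univ : Finset (Fin d)), HasFDerivAt (𝕜 := ℂ)
      (fun z : Fin d → ℂ => (1 - z j * (starRingEnd ℂ) (w j))⁻¹)
      (fderiv ℂ (fun z : Fin d → ℂ => (1 - z j * (starRingEnd ℂ) (w j))⁻¹) z) z := by
    intro j _
    refine DifferentiableAt.hasFDerivAt ?_
    refine DifferentiableAt.fun_inv (by fun_prop) ?_
    exact one_sub_mul_conj_ne_zero (hz j) (hw j)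
  exact (HasFDerivAt.finsetProd this).differentiableAt

lemma repro {d : ℕ} (w : Fin d → ℂ) (hw : ∀ j, ‖w j‖ < 1)
    (G : (Fin d → ℂ) → ℂ) (hG : HolCl G) :
    ∫ θ in Set.Icc (0 : Fin d → ℝ) (fun _ => 2 * Real.pi),
      G (stdTorus d θ) * (starRingEnd ℂ) (szego w (stdTorus d θ))
      = (2 * Real.pi) ^ d * G w := by
  have h := torus_cauchy d w hw G hG
  have hI : (I : ℂ) ^ d ≠ 0 := pow_ne_zero _ I_ne_zero
  apply mul_left_cancel₀ hI
  rw [mul_pow _ I d] at h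
  rw [← mul_assoc, mul_comm (I ^ d) ((2 * Real.pi : ℂ) ^ d), ← h, ← MeasureTheory.integral_const_mul]
  unfold torusIntegral
  refine MeasureTheory.integral_congr_ae (Filter.Eventually.of_forall fun θ => ?_)
  change _ = (∏ i, ((1:ℝ):ℂ) * exp (θ i * I) * I) •
    ((∏ j, (stdTorus d θ j - w j)⁻¹) * G (stdTorus d θ))
  have h1 : ∀ i, ((1:ℝ):ℂ) * exp (θ i * I) * I = stdTorus d θ i * I := by
    intro i; simp [stdTorus, torusMap]
  have h2 : (starRingEnd ℂ) (szego w (stdTorus d θ))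
      = ∏ i, (stdTorus d θ i * (stdTorus d θ i - w i)⁻¹) := by
    unfold szego
    rw [map_prod]
    refine Finset.prod_congr rfl fun i _ => ?_
    have hn := stdTorus_norm θ i
    have hne := sub_ne_zero_of_norms hn (hw i)
    have hc : stdTorus d θ i * (starRingEnd ℂ) (stdTorus d θ i) = 1 := by
      rw [Complex.mul_conj, Complex.normSq_eq_norm_sq, hn]; simp
    have hz : stdTorus d θ i ≠ 0 := by
      intro h; rw [h] at hn; simp at hn
    have h3 : 1 - (starRingEnd ℂ) (stdTorus d θ i) * w i
        = (stdTorus d θ i - w i) * (stdTorus d θ i)⁻¹ := by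
      rw [eq_mul_inv_iff_mul_eq₀ hz]
      linear_combination (-w i) * hc
    rw [map_inv₀, map_sub, map_one, map_mul, Complex.conj_conj, h3, mul_inv, inv_inv, mul_comm]
  simp only [h1, h2, Finset.prod_mul_distrib, Finset.prod_const, Finset.card_univ,
    Fintype.card_fin, smul_eq_mul]
  ring

lemma core {d m : ℕ} (f : (Fin d → ℂ) → ℂ) (hf : HolCl f)
    (hb : ∀ z : Fin d → ℂ, (∀ j, ‖z j‖ ≤ 1) → ‖f z‖ ≤ 1)
    (z : Fin m → Fin d → ℂ) (hz : ∀ i j, ‖z i j‖ < 1) (c : Fin m → ℂ) :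
    0 ≤ ∑ i, ∑ j, c i * (starRingEnd ℂ) (c j) *
      ((1 - f (z i) * (starRingEnd ℂ) (f (z j))) * szego (z j) (z i)) := by
  set S := ∑ i, ∑ j, c i * (starRingEnd ℂ) (c j) *
      ((1 - f (z i) * (starRingEnd ℂ) (f (z j))) * szego (z j) (z i)) with hS
  -- general pairing
  have hlin : ∀ a : Fin m → ℂ, HolCl (fun x => ∑ j, (starRingEnd ℂ) (a j) * szego (z j) x) := by
    intro a x hx
    exact DifferentiableAt.fun_sum fun j _ =>
      (szego_holCl (z j) (hz j) x hx).const_mul _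
  have pair : ∀ (a : Fin m → ℂ) (G : (Fin d → ℂ) → ℂ), HolCl G →
      ∫ θ in Set.Icc (0 : Fin d → ℝ) (fun _ => 2 * Real.pi),
        G (stdTorus d θ) * (starRingEnd ℂ) (∑ j, (starRingEnd ℂ) (a j) * szego (z j) (stdTorus d θ))
      = (2 * Real.pi) ^ d * ∑ j, a j * G (z j) := by
    intro a G hG
    have : ∀ θ, G (stdTorus d θ) *
        (starRingEnd ℂ) (∑ j, (starRingEnd ℂ) (a j) * szego (z j) (stdTorus d θ))
        = ∑ j, a j * (G (stdTorus d θ) * (starRingEnd ℂ) (szego (z j) (stdTorus d θ))) := by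
      intro θ
      simp only [map_sum, map_mul, Complex.conj_conj, Finset.mul_sum]
      exact Finset.sum_congr rfl fun j _ => by ring
    simp only [this]
    rw [MeasureTheory.integral_finsetSum]
    · rw [Finset.mul_sum]
      refine Finset.sum_congr rfl fun j _ => ?_
      rw [MeasureTheory.integral_const_mul, repro (z j) (hz j) G hG]
      ring
    · intro j _
      refine Continuous.integrableOn_Icc ?_
      exact continuous_const.mul (hG.continuous_torus.mul
        (Complex.continuous_conj.comp (szego_holCl (z j) (hz j)).continuous_torus))
  obtain ⟨g, hg⟩ : ∃ g : (Fin d → ℂ) → ℂ,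
      g = fun x => ∑ j, (starRingEnd ℂ) (c j) * szego (z j) x := ⟨_, rfl⟩
  obtain ⟨h, hh⟩ : ∃ h : (Fin d → ℂ) → ℂ,
      h = fun x => ∑ j, (starRingEnd ℂ) (c j * f (z j)) * szego (z j) x := ⟨_, rfl⟩
  have gH : HolCl g := hg ▸ hlin c
  have hH : HolCl h := hh ▸ hlin (fun j => c j * f (z j))
  have fhH : HolCl (fun x => f x * h x) := fun x hx => (hf x hx).mul (hH x hx)
  have pg := pair c
  have ph := pair (fun j => c j * f (z j))
  have eg : ∀ x, ∑ j, (starRingEnd ℂ) (c j) * szego (z j) x = g x := fun x => by rw [hg]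
  have eh : ∀ x, ∑ j, (starRingEnd ℂ) (c j * f (z j)) * szego (z j) x = h x :=
    fun x => by rw [hh]
  simp only [eg] at pg
  simp only [eh] at ph
  have Igg := pg g gH
  have Ihh := ph h hH
  have Ifhg := pg _ fhH
  have cg := gH.continuous_torus
  have ch := hH.continuous_torus
  have cf := hf.continuous_torus
  set μ := MeasureTheory.volume.restrict (Set.Icc (0 : Fin d → ℝ) (fun _ => 2 * Real.pi)) with hμ
  have hint : ∀ u : (Fin d → ℝ) → ℂ, Continuous u → MeasureTheory.Integrable u μ :=
    fun u hu => hu.integrableOn_Icc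
  have hSeq : ((2 * Real.pi) ^ d : ℂ) * S = (∫ θ, g (stdTorus d θ) * (starRingEnd ℂ) (g (stdTorus d θ)) ∂μ)
      - ∫ θ, h (stdTorus d θ) * (starRingEnd ℂ) (h (stdTorus d θ)) ∂μ := by
    rw [Igg, Ihh, ← mul_sub, hS, hg, hh, ← Finset.sum_sub_distrib]
    congr 1
    refine Finset.sum_congr rfl fun i _ => ?_
    simp only [Finset.mul_sum]
    rw [← Finset.sum_sub_distrib]
    refine Finset.sum_congr rfl fun j _ => ?_
    rw [map_mul]; ring
  have hfhg : (∫ θ, f (stdTorus d θ) * h (stdTorus d θ) * (starRingEnd ℂ) (g (stdTorus d θ)) ∂μ)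
      = ∫ θ, h (stdTorus d θ) * (starRingEnd ℂ) (h (stdTorus d θ)) ∂μ := by
    rw [Ihh, Ifhg]
    congr 1
    exact Finset.sum_congr rfl fun i _ => by ring
  have hfhg' : (∫ θ, (starRingEnd ℂ) (f (stdTorus d θ) * h (stdTorus d θ) * (starRingEnd ℂ) (g (stdTorus d θ))) ∂μ)
      = ∫ θ, h (stdTorus d θ) * (starRingEnd ℂ) (h (stdTorus d θ)) ∂μ := by
    rw [integral_conj, hfhg, ← integral_conj]
    congr 1
    funext θ
    simp [mul_comm]
  have key : ((2 * Real.pi) ^ d : ℂ) * S = ((∫ θ, (‖g (stdTorus d θ) - f (stdTorus d θ) * h (stdTorus d θ)‖ ^ 2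
      + ‖h (stdTorus d θ)‖ ^ 2 * (1 - ‖f (stdTorus d θ)‖ ^ 2)) ∂μ : ℝ) : ℂ) := by
    refine Eq.trans ?_ (integral_ofReal (𝕜 := ℂ))
    have e : ∀ θ, (((‖g (stdTorus d θ) - f (stdTorus d θ) * h (stdTorus d θ)‖ ^ 2
      + ‖h (stdTorus d θ)‖ ^ 2 * (1 - ‖f (stdTorus d θ)‖ ^ 2)) : ℝ) : ℂ)
      = (g (stdTorus d θ) * (starRingEnd ℂ) (g (stdTorus d θ))
        + h (stdTorus d θ) * (starRingEnd ℂ) (h (stdTorus d θ)))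
        - (f (stdTorus d θ) * h (stdTorus d θ) * (starRingEnd ℂ) (g (stdTorus d θ))
        + (starRingEnd ℂ) (f (stdTorus d θ) * h (stdTorus d θ) * (starRingEnd ℂ) (g (stdTorus d θ)))) := by
      intro θ
      push_cast
      simp only [← Complex.mul_conj', map_sub, map_mul, Complex.conj_conj]
      ring
    have e' := MeasureTheory.integral_congr_ae (μ := μ) (Filter.Eventually.of_forall e)
    refine Eq.trans ?_ e'.symm
    have cc := Complex.continuous_conj
    have aux : ∀ A B C D : (Fin d → ℝ) → ℂ, Continuous A → Continuous B → Continuous C →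
        Continuous D → ∫ θ, (A θ + B θ) - (C θ + D θ) ∂μ
          = ((∫ θ, A θ ∂μ) + ∫ θ, B θ ∂μ) - ((∫ θ, C θ ∂μ) + ∫ θ, D θ ∂μ) := by
      intro A B C D hA hB hC hD
      rw [MeasureTheory.integral_sub ((hint A hA).fun_add (hint B hB))
        ((hint C hC).fun_add (hint D hD)), MeasureTheory.integral_add (hint A hA) (hint B hB),
        MeasureTheory.integral_add (hint C hC) (hint D hD)]
    refine Eq.trans ?_ (aux _ _ _ _ (cg.mul (cc.comp cg)) (ch.mul (cc.comp ch))
      ((cf.mul ch).mul (cc.comp cg)) (cc.comp ((cf.mul ch).mul (cc.comp cg)))).symm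
    simp only [Function.comp_def, Pi.mul_apply]
    rw [hfhg, hfhg', hSeq]
    ring
  have hpos : (0:ℝ) ≤ ∫ θ, (‖g (stdTorus d θ) - f (stdTorus d θ) * h (stdTorus d θ)‖ ^ 2
      + ‖h (stdTorus d θ)‖ ^ 2 * (1 - ‖f (stdTorus d θ)‖ ^ 2)) ∂μ := by
    refine MeasureTheory.integral_nonneg fun θ => ?_
    have h1 := hb (stdTorus d θ) (fun j => (stdTorus_norm θ j).le)
    have h2 : 0 ≤ 1 - ‖f (stdTorus d θ)‖ ^ 2 := by nlinarith [norm_nonneg (f (stdTorus d θ))]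
    change 0 ≤ _
    positivity
  have hp : (0:ℝ) < (2 * Real.pi) ^ d := by positivity
  have hSr : S = ((((2 * Real.pi) ^ d)⁻¹ * ∫ θ, (‖g (stdTorus d θ) - f (stdTorus d θ) * h (stdTorus d θ)‖ ^ 2
      + ‖h (stdTorus d θ)‖ ^ 2 * (1 - ‖f (stdTorus d θ)‖ ^ 2)) ∂μ : ℝ) : ℂ) := by
    rw [Complex.ofReal_mul, ← key]
    have : ((2 * Real.pi) ^ d : ℂ) ≠ 0 := by exact_mod_cast hp.ne'
    push_cast
    field_simp
  rw [hSr]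
  exact Complex.zero_le_real.mpr (mul_nonneg (inv_nonneg.mpr hp.le) hpos)

theorem pick_kernel_psd_polydisk (d : ℕ) (hd : 1 ≤ d) (f : (Fin d → ℂ) → ℂ)
    (hf : DifferentiableOn ℂ f (Polydisk d))
    (hb : ∀ z ∈ Polydisk d, ‖f z‖ ≤ 1) :
    IsPSDKernelOn (Polydisk d)
      (fun z w => (1 - f z * (starRingEnd ℂ) (f w)) /
        ∏ j, (1 - z j * (starRingEnd ℂ) (w j))) := by
  intro m z hz c
  have hopen : IsOpen (Polydisk d) := by
    have : Polydisk d = ⋂ j, {z : Fin d → ℂ | ‖z j‖ < 1} := by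
      ext z; simp [Polydisk]
    rw [this]
    exact isOpen_iInter_of_finite fun j =>
      isOpen_lt ((continuous_apply j).norm) continuous_const
  have hdiff : ∀ x ∈ Polydisk d, DifferentiableAt ℂ f x := fun x hx =>
    hf.differentiableAt (hopen.mem_nhds hx)
  have hmem : ∀ r : ℝ, 0 < r → r < 1 → ∀ x : Fin d → ℂ, (∀ j, ‖x j‖ ≤ 1) →
      ((r : ℂ) • x) ∈ Polydisk d := by
    intro r h0 h1 x hx j
    simp only [Pi.smul_apply, smul_eq_mul, norm_mul, Complex.norm_real, Real.norm_eq_abs,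
      abs_of_pos h0]
    nlinarith [hx j, norm_nonneg (x j)]
  have step : ∀ r : ℝ, 0 < r → r < 1 →
      0 ≤ ∑ i, ∑ j, c i * (starRingEnd ℂ) (c j) *
      ((1 - f ((r:ℂ) • z i) * (starRingEnd ℂ) (f ((r:ℂ) • z j))) * szego (z j) (z i)) := by
    intro r h0 h1
    refine core (fun x => f ((r:ℂ) • x)) ?_ ?_ z hz c
    · intro x hx
      exact DifferentiableAt.comp x (g := f) (f := fun x : Fin d → ℂ => (r:ℂ) • x)
        (hdiff _ (hmem r h0 h1 x hx)) (by fun_prop)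
    · intro x hx
      exact hb _ (hmem r h0 h1 x hx)
  have hcont : ∀ i, Filter.Tendsto (fun r : ℝ => f ((r:ℂ) • z i)) (nhdsWithin 1 (Set.Iio 1))
      (nhds (f (z i))) := by
    intro i
    have h1 : Filter.Tendsto (fun r : ℝ => (r:ℂ) • z i) (nhds 1) (nhds (z i)) := by
      have : Continuous (fun r : ℝ => (r:ℂ) • z i) := by fun_prop
      simpa using this.tendsto 1
    exact ((hdiff _ (hz i)).continuousAt.tendsto.comp h1).mono_left nhdsWithin_le_nhds
  have hlim : Filter.Tendsto (fun r : ℝ => ∑ i, ∑ j, c i * (starRingEnd ℂ) (c j) *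
      ((1 - f ((r:ℂ) • z i) * (starRingEnd ℂ) (f ((r:ℂ) • z j))) * szego (z j) (z i)))
      (nhdsWithin 1 (Set.Iio 1))
      (nhds (∑ i, ∑ j, c i * (starRingEnd ℂ) (c j) *
      ((1 - f (z i) * (starRingEnd ℂ) (f (z j))) * szego (z j) (z i)))) := by
    refine tendsto_finsetSum _ fun i _ => tendsto_finsetSum _ fun j _ => ?_
    refine Filter.Tendsto.const_mul _ (Filter.Tendsto.mul_const _ ?_)
    exact tendsto_const_nhds.sub ((hcont i).mul
      ((Complex.continuous_conj.tendsto _).comp (hcont j)))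
  have hfin := ge_of_tendsto hlim (b := 0) (by
    filter_upwards [Ioo_mem_nhdsLT (show (0:ℝ) < 1 by norm_num)] with r hr
    exact step r hr.1 hr.2)
  simpa [szego, div_eq_mul_inv, Finset.prod_inv_distrib] using hfin
end

section
/- Let d ≥ 2 and let f : D^d → C be holomorphic with |f| ≤ 1. Then for every nontrivial partition S ⊔ T = {1,...,d} there exist positive semi-definite kernels K and L on D^d such that (1 − z_j conj(ζ_j))K(z,ζ) is positive semi-definite for every j ∈ S, (1 − z_k conj(ζ_k))L(z,ζ) is positive semi-definite for every k ∈ T, and (1 − f(z) conj(f(ζ)))/∏_{j=1}^d (1 − z_j conj(ζ_j)) = K(z,ζ) + L(z,ζ). -/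
open Complex Finset ComplexOrder

/-- A kernel `K` on the polydisk is `j`-contractive: `(1 - z_j conj(ζ_j)) K` is PSD. -/
def JContractive (d : ℕ) (j : Fin d) (K : (Fin d → ℂ) → (Fin d → ℂ) → ℂ) : Prop :=
  IsPSDKernelOn (Polydisk d)
    (fun z ζ => (1 - z j * (starRingEnd ℂ) (ζ j)) * K z ζ)

open scoped InnerProductSpace in
lemma short_exists {X : Type*} [NormedAddCommGroup X] [InnerProductSpace ℂ X] [CompleteSpace X]
    (B : X →L[ℂ] X) (hB : ∀ x, ‖B x‖ ≤ ‖x‖) (E : Submodule ℂ X) :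
    ∃ N : X →L[ℂ] X, (∀ x, ∀ e ∈ E, ‖N x‖ ^ 2 ≤ ‖x + e‖ ^ 2 - ‖B (x + e)‖ ^ 2) ∧
      ∀ x, ∀ ε > (0 : ℝ), ∃ e ∈ E, ‖x + e‖ ^ 2 - ‖B (x + e)‖ ^ 2 ≤ ‖N x‖ ^ 2 + ε := by
  have hform : ∀ x, ⟪(1 - ContinuousLinearMap.adjoint B * B) x, x⟫_ℂ
      = ((‖x‖ ^ 2 - ‖B x‖ ^ 2 : ℝ) : ℂ) := by
    intro x
    change ⟪x - ContinuousLinearMap.adjoint B (B x), x⟫_ℂ = _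
    rw [inner_sub_left, ContinuousLinearMap.adjoint_inner_left, inner_self_eq_norm_sq_to_K, inner_self_eq_norm_sq_to_K]
    push_cast
    rfl
  have hpos : (0 : X →L[ℂ] X) ≤ 1 - ContinuousLinearMap.adjoint B * B := by
    rw [ContinuousLinearMap.nonneg_iff_isPositive, ContinuousLinearMap.isPositive_iff_complex]
    intro x
    rw [hform]
    constructor
    · rw [RCLike.re_eq_complex_re, Complex.ofReal_re]
    · have := hB x
      have h2 : ‖B x‖ ^ 2 ≤ ‖x‖ ^ 2 := by gcongr
      rw [RCLike.re_eq_complex_re, Complex.ofReal_re]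
      linarith
  obtain ⟨G, hG⟩ := CStarAlgebra.nonneg_iff_eq_star_mul_self.mp hpos
  have hGn : ∀ x, ‖G x‖ ^ 2 = ‖x‖ ^ 2 - ‖B x‖ ^ 2 := by
    intro x
    have h := hform x
    rw [hG] at h
    change ⟪ContinuousLinearMap.adjoint G (G x), x⟫_ℂ = _ at h
    rw [ContinuousLinearMap.adjoint_inner_left, inner_self_eq_norm_sq_to_K] at h
    have h' : ((‖G x‖ ^ 2 : ℝ) : ℂ) = ((‖x‖ ^ 2 - ‖B x‖ ^ 2 : ℝ) : ℂ) := by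
      rw [← h]; push_cast; rfl
    exact Complex.ofReal_injective h'
  set F : Submodule ℂ X := (E.map (G : X →ₗ[ℂ] X)).topologicalClosure with hF
  have : CompleteSpace F := (Submodule.isClosed_topologicalClosure _).completeSpace_coe
  have hGF : ∀ e ∈ E, G e ∈ F := fun e he =>
    Submodule.le_topologicalClosure _ ⟨e, he, rfl⟩
  have hN0 : ∀ e ∈ E, Fᗮ.starProjection (G e) = 0 := by
    intro e he
    rw [Submodule.starProjection_apply_eq_zero_iff]
    exact Submodule.le_orthogonal_orthogonal _ (hGF e he)
  refine ⟨Fᗮ.starProjection ∘L G, ?_, ?_⟩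
  · intro x e he
    rw [← hGn]
    have h1 : (Fᗮ.starProjection ∘L G) x = Fᗮ.starProjection (G (x + e)) := by
      simp [map_add, hN0 e he]
    rw [h1]
    gcongr
    exact Submodule.norm_starProjection_apply_le _ _
  · intro x ε hε
    have hmem : F.starProjection (G x) ∈ closure ((E.map (G : X →ₗ[ℂ] X) : Submodule ℂ X) : Set X) := by
      rw [← Submodule.topologicalClosure_coe]
      exact Submodule.starProjection_apply_mem _ _
    obtain ⟨y, ⟨e, he, rfl⟩, hy⟩ := Metric.mem_closure_iff.mp hmem (Real.sqrt ε) (Real.sqrt_pos.mpr hε)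
    refine ⟨-e, E.neg_mem he, ?_⟩
    rw [← hGn, Submodule.norm_sq_eq_add_norm_sq_starProjection _ F]
    have h1 : Fᗮ.starProjection (G (x + -e)) = (Fᗮ.starProjection ∘L G) x := by
      rw [map_add, map_neg, map_add, map_neg, hN0 e he, neg_zero, add_zero]; rfl
    have h2 : F.starProjection (G (x + -e)) = F.starProjection (G x) - G e := by
      rw [map_add, map_neg, map_add, map_neg, Submodule.starProjection_eq_self_iff.mpr (hGF e he)]
      abel
    rw [h1, h2]
    have h3 : ‖F.starProjection (G x) - G e‖ ^ 2 ≤ ε := by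
      rw [dist_eq_norm] at hy
      calc _ ≤ (Real.sqrt ε) ^ 2 := by gcongr; exact hy.le
        _ = ε := Real.sq_sqrt hε.le
    linarith

lemma starProj_comm {X : Type*} [NormedAddCommGroup X] [InnerProductSpace ℂ X] [CompleteSpace X]
    (H E L : Submodule ℂ X) [H.HasOrthogonalProjection] [E.HasOrthogonalProjection]
    [L.HasOrthogonalProjection] (hHL : H ≤ L) (hEL : E ≤ L) (hHE : H ⟂ E) (hL : L ≤ H ⊔ E) (y : X) :
    L.starProjection y = H.starProjection y + E.starProjection y := by
  refine Submodule.eq_starProjection_of_mem_orthogonal (L.add_mem (hHL (H.starProjection_apply_mem y))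
    (hEL (E.starProjection_apply_mem y))) ?_
  rw [Submodule.mem_orthogonal]
  intro u hu
  obtain ⟨h, hh, e, he, rfl⟩ := Submodule.mem_sup.mp (hL hu)
  have h1 := (Submodule.mem_orthogonal _ _).mp (H.sub_starProjection_mem_orthogonal y) h hh
  have h2 := (Submodule.mem_orthogonal _ _).mp (E.sub_starProjection_mem_orthogonal y) e he
  have h3 := Submodule.isOrtho_iff_inner_eq.mp hHE h hh _ (E.starProjection_apply_mem y)
  have h4 := Submodule.isOrtho_iff_inner_eq.mp hHE.symm e he _ (H.starProjection_apply_mem y)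
  rw [inner_add_left]
  rw [show y - (H.starProjection y + E.starProjection y)
    = (y - H.starProjection y) - E.starProjection y by abel, inner_sub_right, h1, h3,
    show (y - H.starProjection y) - E.starProjection y
    = (y - E.starProjection y) - H.starProjection y by abel, inner_sub_right, h2, h4]
  simp

open ContinuousLinearMap in
lemma core_s17 {X : Type*} [NormedAddCommGroup X] [InnerProductSpace ℂ X] [CompleteSpace X]
    (M : X →L[ℂ] X) (hM : ‖M‖ ≤ 1)
    (H E L : Submodule ℂ X) [H.HasOrthogonalProjection] [E.HasOrthogonalProjection]
    [L.HasOrthogonalProjection] (hHL : H ≤ L) (hEL : E ≤ L) (hHE : H ⟂ E) (hL : L ≤ H ⊔ E)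
    (hMH : ∀ x ∈ H, M x ∈ H) (hML : ∀ x ∈ L, M x ∈ L) :
    ∃ N : X →L[ℂ] X, (∀ x, ‖N x‖ ≤ ‖x‖) ∧
      (∀ v ∈ H, ‖N v‖ ^ 2 ≤ ‖v‖ ^ 2 - ‖H.starProjection (adjoint M v)‖ ^ 2) ∧
      (∀ U : X →L[ℂ] X, (∀ x, ‖adjoint U x‖ = ‖x‖) → M * U = U * M →
        (∀ x ∈ H, U x ∈ H) → (∀ x ∈ L, U x ∈ L) → (∀ x ∈ L, adjoint U x ∈ L) →
        ∀ v ∈ H, ‖N (H.starProjection (adjoint U v))‖ ^ 2 ≤ ‖N v‖ ^ 2) ∧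
      (∀ U : X →L[ℂ] X, (∀ x, ‖adjoint U x‖ = ‖x‖) → (∀ x, adjoint U (U x) = x) → M * U = U * M →
        (∀ x ∈ E, U x ∈ E) → ∀ v ∈ H, ∀ t, t = H.starProjection (adjoint U v) →
        ‖t‖ ^ 2 - ‖H.starProjection (adjoint M t)‖ ^ 2 - ‖N t‖ ^ 2 ≤
        ‖v‖ ^ 2 - ‖H.starProjection (adjoint M v)‖ ^ 2 - ‖N v‖ ^ 2) := by
  have hMs : ∀ x, ‖adjoint M x‖ ≤ ‖x‖ := by
    intro x
    refine ((adjoint M).le_opNorm x).trans ?_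
    rw [LinearIsometryEquiv.norm_map]
    nlinarith [norm_nonneg x]
  obtain ⟨N, hN1, hN2⟩ := short_exists (L.starProjection ∘L adjoint M)
    (fun x => (L.norm_starProjection_apply_le _).trans (hMs x)) E
  simp only [coe_comp, Function.comp_apply] at hN1 hN2
  have hPL := starProj_comm H E L hHL hEL hHE hL
  -- adjoint commutation
  have hcomm : ∀ U : X →L[ℂ] X, M * U = U * M → ∀ x, adjoint M (adjoint U x) = adjoint U (adjoint M x) := by
    intro U hU x
    have h := congrArg star hU
    rw [star_mul, star_mul] at h
    have := congrArg (fun T : X →L[ℂ] X => T x) h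
    simpa [star_eq_adjoint] using this.symm
  have hpyth : ∀ y, ‖L.starProjection y‖ ^ 2 = ‖H.starProjection y‖ ^ 2 + ‖E.starProjection y‖ ^ 2 := by
    intro y
    rw [hPL, sq, sq, sq]
    exact norm_add_sq_eq_norm_sq_add_norm_sq_of_inner_eq_zero _ _
      (Submodule.isOrtho_iff_inner_eq.mp hHE _ (H.starProjection_apply_mem y) _ (E.starProjection_apply_mem y))
  have hpyth2 : ∀ v ∈ H, ∀ e ∈ E, ‖v + e‖ ^ 2 = ‖v‖ ^ 2 + ‖e‖ ^ 2 := by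
    intro v hv e he
    rw [sq, sq, sq]
    exact norm_add_sq_eq_norm_sq_add_norm_sq_of_inner_eq_zero _ _
      (Submodule.isOrtho_iff_inner_eq.mp hHE _ hv _ he)
  have hPHe : ∀ e ∈ E, H.starProjection (adjoint M e) = 0 := by
    intro e he
    rw [Submodule.starProjection_apply_eq_zero_iff, Submodule.mem_orthogonal]
    intro u hu
    rw [adjoint_inner_right]
    exact Submodule.isOrtho_iff_inner_eq.mp hHE _ (hMH u hu) _ he
  have hq : ∀ v ∈ H, ∀ e ∈ E, ‖v + e‖ ^ 2 - ‖L.starProjection (adjoint M (v + e))‖ ^ 2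
      = ‖v‖ ^ 2 - ‖H.starProjection (adjoint M v)‖ ^ 2
        - (‖E.starProjection (adjoint M (v + e))‖ ^ 2 - ‖e‖ ^ 2) := by
    intro v hv e he
    rw [hpyth, hpyth2 v hv e he]
    have : H.starProjection (adjoint M (v + e)) = H.starProjection (adjoint M v) := by
      rw [map_add, map_add, hPHe e he, add_zero]
    rw [this]; ring
  refine ⟨N, ?_, ?_, ?_, ?_⟩
  · intro x
    have h := hN1 x 0 E.zero_mem
    rw [add_zero] at h
    have : ‖N x‖ ^ 2 ≤ ‖x‖ ^ 2 := by nlinarith [sq_nonneg ‖L.starProjection (adjoint M x)‖]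
    exact le_of_sq_le_sq this (norm_nonneg _)
  · intro v hv
    have h := hN1 v 0 E.zero_mem
    rw [hq v hv 0 E.zero_mem] at h
    simp only [norm_zero, add_zero] at h
    nlinarith [sq_nonneg ‖E.starProjection (adjoint M v)‖]
  · intro U hU hMU hUH hUL hUL' v hv
    refine le_of_forall_pos_le_add fun ε hε => ?_
    obtain ⟨e, he, h⟩ := hN2 v ε hε
    refine le_trans ?_ h
    set t := H.starProjection (adjoint U v)
    have hLH : ∀ x ∈ L, (∀ u ∈ H, inner ℂ u x = 0) → x ∈ E := by
      intro x hx hxu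
      rw [← Submodule.starProjection_eq_self_iff] at hx ⊢
      rw [hPL] at hx
      have : H.starProjection x = 0 := by
        rw [Submodule.starProjection_apply_eq_zero_iff, Submodule.mem_orthogonal]
        exact hxu
      rwa [this, zero_add] at hx
    have he0 : adjoint U v - t ∈ E := by
      apply hLH
      · exact L.sub_mem (hUL' v (hHL hv)) (hHL (H.starProjection_apply_mem _))
      · exact (Submodule.mem_orthogonal _ _).mp (H.sub_starProjection_mem_orthogonal _)
    have he1 : adjoint U e ∈ E := by
      apply hLH
      · exact hUL' _ (hEL he)
      · intro u hu
        rw [adjoint_inner_right]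
        exact Submodule.isOrtho_iff_inner_eq.mp hHE _ (hUH u hu) _ he
    have h1 := hN1 t _ (E.add_mem he0 he1)
    have h2 : t + (adjoint U v - t + adjoint U e) = adjoint U (v + e) := by
      rw [map_add]; abel
    rw [h2, hU, hcomm U hMU] at h1
    have h3 : L.starProjection (adjoint U (adjoint M (v + e)))
        = adjoint U (L.starProjection (adjoint M (v + e))) := by
      refine (Submodule.eq_starProjection_of_mem_orthogonal (hUL' _ (L.starProjection_apply_mem _)) ?_)
      rw [← map_sub, Submodule.mem_orthogonal]
      intro u hu
      rw [adjoint_inner_right]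
      exact (Submodule.mem_orthogonal _ _).mp (L.sub_starProjection_mem_orthogonal _) _ (hUL u hu)
    rw [h3, hU] at h1
    exact h1
  · intro U hU hU' hMU hUE v hv t ht
    have htH : t ∈ H := ht ▸ H.starProjection_apply_mem _
    refine le_of_forall_pos_le_add fun ε hε => ?_
    obtain ⟨e, he, h⟩ := hN2 t ε hε
    have h1 := hN1 v (U e) (hUE e he)
    rw [hq t htH e he] at h
    rw [hq v hv _ (hUE e he)] at h1
    have hUe : ‖U e‖ = ‖e‖ := by rw [← hU, hU']
    have key : E.starProjection (adjoint M (t + e))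
        = E.starProjection (adjoint U (E.starProjection (adjoint M (v + U e)))) := by
      have a1 : E.starProjection (adjoint U (E.starProjection (adjoint M (v + U e))))
          = E.starProjection (adjoint U (adjoint M (v + U e))) := by
        rw [← sub_eq_zero, ← map_sub, ← map_sub, Submodule.starProjection_apply_eq_zero_iff,
          Submodule.mem_orthogonal]
        intro u hu
        rw [adjoint_inner_right, ← neg_sub, inner_neg_right,
          (Submodule.mem_orthogonal _ _).mp (E.sub_starProjection_mem_orthogonal _) _ (hUE u hu), neg_zero]
      rw [a1, ← hcomm U hMU, map_add (adjoint U), hU', ← sub_eq_zero, ← map_sub, ← map_sub,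
        Submodule.starProjection_apply_eq_zero_iff, Submodule.mem_orthogonal]
      intro u hu
      rw [adjoint_inner_right, show t + e - (adjoint U v + e) = -(adjoint U v - t) by abel,
        inner_neg_right, neg_eq_zero]
      obtain ⟨x, hx, y, hy, hxy⟩ := Submodule.mem_sup.mp (hL (hML u (hEL hu)))
      rw [← hxy, inner_add_left, ht,
        (Submodule.mem_orthogonal _ _).mp (H.sub_starProjection_mem_orthogonal _) _ hx, zero_add,
        inner_sub_right, adjoint_inner_right,
        Submodule.isOrtho_iff_inner_eq.mp hHE.symm _ (hUE y hy) _ hv,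
        Submodule.isOrtho_iff_inner_eq.mp hHE.symm _ hy _ (H.starProjection_apply_mem _), sub_zero]
    have hle : ‖E.starProjection (adjoint M (t + e))‖ ≤ ‖E.starProjection (adjoint M (v + U e))‖ := by
      rw [key]
      refine (E.norm_starProjection_apply_le _).trans ?_
      rw [hU]
    have hle2 : ‖E.starProjection (adjoint M (t + e))‖ ^ 2
        ≤ ‖E.starProjection (adjoint M (v + U e))‖ ^ 2 := by gcongr
    rw [hUe] at h1
    linarith

lemma interp_monomial (N : ℕ) (hN : 0 < N) (ω : ℂ) (hω : IsPrimitiveRoot ω N) (m : ℕ) (z : ℂ) :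
    ∑ k ∈ range N, (ω ^ k) ^ m * ((N : ℂ)⁻¹ * ∑ n ∈ range N, (z * (ω⁻¹) ^ k) ^ n) = z ^ (m % N) := by
  have hN0 : (N : ℂ) ≠ 0 := by exact_mod_cast hN.ne'
  have hω0 : ω ≠ 0 := hω.ne_zero hN.ne'
  have h1 : ∀ k ∈ range N, (ω ^ k) ^ m * ((N : ℂ)⁻¹ * ∑ n ∈ range N, (z * (ω⁻¹) ^ k) ^ n)
      = ∑ n ∈ range N, (N : ℂ)⁻¹ * z ^ n * (ω ^ (m % N) * (ω⁻¹) ^ n) ^ k := by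
    intro k _
    have : (ω ^ k) ^ m = (ω ^ (m % N)) ^ k := by
      rw [← pow_mul, mul_comm, pow_mul]
      congr 1
      conv_lhs => rw [← Nat.div_add_mod m N, pow_add, pow_mul, hω.pow_eq_one, one_pow, one_mul]
    rw [this, mul_sum, mul_sum]
    refine sum_congr rfl fun n _ => ?_
    rw [mul_pow, mul_pow, ← pow_mul, ← pow_mul, ← pow_mul, mul_comm n k]
    ring
  rw [sum_congr rfl h1, sum_comm]
  have h2 : ∀ n ∈ range N, ∑ k ∈ range N, (N : ℂ)⁻¹ * z ^ n * (ω ^ (m % N) * (ω⁻¹) ^ n) ^ k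
      = if n = m % N then z ^ n else 0 := by
    intro n hn
    rw [← mul_sum]
    split_ifs with h
    · subst h
      have : ω ^ (m % N) * ω⁻¹ ^ (m % N) = 1 := by rw [← mul_pow, mul_inv_cancel₀ hω0, one_pow]
      rw [this]
      simp
      field_simp
    · set x := ω ^ (m % N) * (ω⁻¹) ^ n with hx
      have hxN : x ^ N = 1 := by
        rw [hx, mul_pow, ← pow_mul, ← pow_mul, mul_comm _ N, mul_comm _ N, pow_mul, pow_mul, inv_pow,
          hω.pow_eq_one]
        simp
      have hx1 : x ≠ 1 := by
        intro h1
        apply h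
        rw [hx, inv_pow, mul_inv_eq_one₀ (pow_ne_zero _ hω0)] at h1
        exact (hω.pow_inj (Nat.mod_lt _ hN) (mem_range.mp hn) h1).symm
      have := mul_geom_sum x N
      rw [hxN, sub_self] at this
      rcases mul_eq_zero.mp this with h3 | h3
      · exact absurd (sub_eq_zero.mp h3) hx1
      · rw [h3, mul_zero]
  rw [sum_congr rfl h2, sum_ite_eq', if_pos (mem_range.mpr (Nat.mod_lt _ hN))]

lemma taylor_coeff (g : ℂ → ℂ) (C : ℝ) (hg : DifferentiableOn ℂ g (Metric.ball 0 1))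
    (hC : ∀ z ∈ Metric.ball (0 : ℂ) 1, ‖g z‖ ≤ C) (R : ℝ) (hR0 : 0 < R) (hR : R < 1) :
    ∃ a : ℕ → ℂ, (∀ n, ‖a n‖ ≤ C / R ^ n) ∧
      ∀ z ∈ Metric.ball (0 : ℂ) 1, HasSum (fun n => a n * z ^ n) (g z) := by
  refine ⟨fun n => (n.factorial : ℂ)⁻¹ * iteratedDeriv n g 0, fun n => ?_, fun z hz => ?_⟩
  · have hsub : Metric.closedBall (0 : ℂ) R ⊆ Metric.ball 0 1 := Metric.closedBall_subset_ball hR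
    have hd : DiffContOnCl ℂ g (Metric.ball 0 R) := by
      apply DifferentiableOn.diffContOnCl
      rw [closure_ball _ hR0.ne']
      exact hg.mono hsub
    have := Complex.norm_iteratedDeriv_le_of_forall_mem_sphere_norm_le (n := n) hR0 hd
      (fun z hz => hC z (hsub (Metric.sphere_subset_closedBall hz)))
    rw [norm_mul, norm_inv, Complex.norm_natCast]
    have hf : (0 : ℝ) < n.factorial := by exact_mod_cast n.factorial_pos
    rw [inv_mul_le_iff₀ hf]
    calc _ ≤ _ := this
      _ = _ := by ring
  · have := Complex.hasSum_taylorSeries_on_ball (c := 0) (r := 1) (f := g) (by simpa using hg) (by simpa using hz)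
    simpa [mul_comm, mul_left_comm, mul_assoc] using this

lemma interp_one (C : ℝ) (hC0 : 0 ≤ C) (r : ℝ) (hr0 : 0 < r) (hr1 : r < 1) (ε : ℝ) (hε : 0 < ε) :
    ∃ (N : ℕ) (w : ℕ → ℂ) (l : ℕ → Polynomial ℂ), 0 < N ∧ (∀ k, ‖w k‖ < 1) ∧
      (∀ k z, ‖z‖ ≤ 1 → ‖(l k).eval z‖ ≤ 1) ∧
      ∀ g : ℂ → ℂ, DifferentiableOn ℂ g (Metric.ball 0 1) →
        (∀ z ∈ Metric.ball (0 : ℂ) 1, ‖g z‖ ≤ C) → ∀ z, ‖z‖ ≤ 1 →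
        ‖g (r * z) - ∑ k ∈ range N, g (w k) * (l k).eval z‖ ≤ ε := by
  obtain ⟨R, hrR, hR1⟩ := exists_between hr1
  have hR0 : 0 < R := hr0.trans hrR
  set q := r / R with hq
  have hq0 : 0 < q := by positivity
  have hq1 : q < 1 := (div_lt_one hR0).mpr hrR
  have htend : Filter.Tendsto (fun N : ℕ => 2 * C * (q ^ N * (1 - q)⁻¹)) Filter.atTop (nhds 0) := by
    have := ((tendsto_pow_atTop_nhds_zero_of_lt_one hq0.le hq1).mul_const ((1 - q)⁻¹)).const_mul (2 * C)
    simpa using this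
  obtain ⟨N, hN, hN0⟩ := ((htend.eventually (gt_mem_nhds hε)).and (Filter.eventually_gt_atTop 0)).exists
  set ω : ℂ := Complex.exp (2 * Real.pi * Complex.I / N) with hωdef
  have hω : IsPrimitiveRoot ω N := Complex.isPrimitiveRoot_exp N hN0.ne'
  have hωn : ‖ω‖ = 1 := hω.norm'_eq_one hN0.ne'
  have hNc : (0 : ℝ) < N := by exact_mod_cast hN0
  let l : ℕ → Polynomial ℂ := fun k => Polynomial.C (N : ℂ)⁻¹ *
    ∑ n ∈ range N, (Polynomial.X * Polynomial.C ((ω⁻¹) ^ k)) ^ n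
  have hl : ∀ k z, (l k).eval z = (N : ℂ)⁻¹ * ∑ n ∈ range N, (z * (ω⁻¹) ^ k) ^ n := by
    intro k z
    simp only [l, Polynomial.eval_mul, Polynomial.eval_C, Polynomial.eval_finsetSum,
      Polynomial.eval_pow, Polynomial.eval_X]
  refine ⟨N, fun k => r * ω ^ k, l, hN0, ?_, ?_, ?_⟩
  · intro k
    simp [hωn, abs_of_pos hr0, hr1]
  · intro k z hz
    rw [hl, norm_mul, norm_inv, Complex.norm_natCast, inv_mul_le_iff₀ hNc, mul_one]
    refine (norm_sum_le _ _).trans ?_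
    calc _ ≤ ∑ n ∈ range N, (1 : ℝ) := by
          refine sum_le_sum fun n _ => ?_
          rw [norm_pow, norm_mul, norm_pow, norm_inv, hωn]
          apply pow_le_one₀ (by positivity)
          simpa using hz
      _ = N := by simp
  · intro g hg hgC z hz
    obtain ⟨a, ha, hsum⟩ := taylor_coeff g C hg hgC R hR0 hR1
    have h1 : HasSum (fun m => a m * (r * z) ^ m) (g (r * z)) := by
      apply hsum
      rw [mem_ball_zero_iff, norm_mul, Complex.norm_real, Real.norm_of_nonneg hr0.le]
      nlinarith [norm_nonneg z]
    have h2 : HasSum (fun m => ∑ k ∈ range N, (a m * (r * ω ^ k) ^ m) * (l k).eval z)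
        (∑ k ∈ range N, g (r * ω ^ k) * (l k).eval z) := by
      refine hasSum_sum fun k _ => HasSum.mul_right _ (hsum _ ?_)
      simp [hωn, abs_of_pos hr0, hr1]
    have h3 : ∀ m, ∑ k ∈ range N, (a m * (r * ω ^ k) ^ m) * (l k).eval z
        = a m * r ^ m * z ^ (m % N) := by
      intro m
      rw [← interp_monomial N hN0 ω hω m z, mul_sum]
      refine sum_congr rfl fun k _ => ?_
      rw [hl, mul_pow]; ring
    simp only [h3] at h2
    have h4 := h1.sub h2
    have h5 : HasSum (fun m => 2 * C * (q ^ N * q ^ m)) (2 * C * (q ^ N * (1 - q)⁻¹)) :=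
      ((hasSum_geometric_of_lt_one hq0.le hq1).mul_left _).mul_left _
    have h6 : HasSum (fun m => a (m + N) * (r * z) ^ (m + N) - a (m + N) * r ^ (m + N) * z ^ ((m + N) % N))
        (g (r * z) - ∑ k ∈ range N, g (r * ω ^ k) * (l k).eval z) := by
      rw [hasSum_nat_add_iff (f := fun m => a m * (r * z) ^ m - a m * r ^ m * z ^ (m % N))]
      have : ∑ i ∈ range N, (a i * (r * z) ^ i - a i * r ^ i * z ^ (i % N)) = 0 := by
        refine sum_eq_zero fun i hi => ?_
        rw [Nat.mod_eq_of_lt (mem_range.mp hi), mul_pow]; ring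
      rw [this, add_zero]
      exact h4
    rw [← h6.tsum_eq]
    refine (tsum_of_norm_bounded h5 fun m => ?_).trans hN.le
    have : a (m + N) * (r * z) ^ (m + N) - a (m + N) * r ^ (m + N) * z ^ ((m + N) % N)
        = a (m + N) * r ^ (m + N) * (z ^ (m + N) - z ^ ((m + N) % N)) := by
      rw [mul_pow]; ring
    rw [this, norm_mul, norm_mul, norm_pow, Complex.norm_real, Real.norm_of_nonneg hr0.le]
    have b1 : ‖z ^ (m + N) - z ^ ((m + N) % N)‖ ≤ 2 := by
      refine (norm_sub_le _ _).trans ?_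
      rw [norm_pow, norm_pow]
      have := pow_le_one₀ (n := m + N) (norm_nonneg z) hz
      have := pow_le_one₀ (n := (m + N) % N) (norm_nonneg z) hz
      linarith
    have b2 : ‖a (m + N)‖ * r ^ (m + N) ≤ C * q ^ (m + N) := by
      calc _ ≤ C / R ^ (m + N) * r ^ (m + N) := by gcongr; exact ha _
        _ = _ := by rw [hq, div_pow]; ring
    calc _ ≤ C * q ^ (m + N) * 2 := by gcongr
      _ = _ := by rw [pow_add]; ring

lemma poly_approx : ∀ (d : ℕ) (f : (Fin d → ℂ) → ℂ), DifferentiableOn ℂ f (Polydisk d) →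
    ∀ C : ℝ, 0 ≤ C → (∀ z ∈ Polydisk d, ‖f z‖ ≤ C) → ∀ r : ℝ, 0 < r → r < 1 → ∀ ε > (0 : ℝ),
    ∃ p : MvPolynomial (Fin d) ℂ, ∀ z : Fin d → ℂ, (∀ j, ‖z j‖ ≤ 1) →
      ‖f (fun j => r * z j) - MvPolynomial.eval z p‖ ≤ ε := by
  intro d
  induction d with
  | zero =>
    intro f _ C _ _ r _ _ ε hε
    refine ⟨MvPolynomial.C (f 0), fun z _ => ?_⟩
    rw [Subsingleton.elim (fun j => (r : ℂ) * z j) 0]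
    simpa using hε.le
  | succ d ih =>
    intro f hf C hC0 hC r hr0 hr1 ε hε
    obtain ⟨N, w, l, hN0, hw, hl, hg⟩ := interp_one C hC0 r hr0 hr1 (ε / 2) (by linarith)
    have hNc : (0 : ℝ) < N := by exact_mod_cast hN0
    have hcons : ∀ (a : ℂ) (y : Fin d → ℂ), ‖a‖ < 1 → y ∈ Polydisk d →
        (Fin.cons a y : Fin (d + 1) → ℂ) ∈ Polydisk (d + 1) := by
      intro a y ha hy j
      refine Fin.cases ?_ (fun i => ?_) j
      · simpa using ha
      · simpa using hy i
    have hp : ∀ k, ∃ p : MvPolynomial (Fin d) ℂ, ∀ z : Fin d → ℂ, (∀ j, ‖z j‖ ≤ 1) →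
        ‖f (Fin.cons (w k) (fun j => r * z j)) - MvPolynomial.eval z p‖ ≤ ε / (2 * N) := by
      intro k
      refine ih (fun y => f (Fin.cons (w k) y)) ?_ C hC0 (fun y hy => hC _ (hcons _ _ (hw k) hy)) r hr0 hr1 _
        (by positivity)
      refine hf.comp (t := Polydisk (d + 1)) (f := fun y : Fin d → ℂ => (Fin.cons (w k) y : Fin (d + 1) → ℂ)) ?_ ?_
      · refine Differentiable.differentiableOn ?_
        rw [differentiable_pi]
        intro j
        refine Fin.cases ?_ (fun i => ?_) j
        · simp
        · simp only [Fin.cons_succ]; fun_prop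
      · intro y hy
        exact hcons _ _ (hw k) hy
    choose p hp using hp
    refine ⟨∑ k ∈ range N, MvPolynomial.rename Fin.succ (p k) *
      Polynomial.aeval (MvPolynomial.X 0) (l k), fun z hz => ?_⟩
    set z' : Fin d → ℂ := fun j => z j.succ with hz'
    have e1 : MvPolynomial.eval z (∑ k ∈ range N, MvPolynomial.rename Fin.succ (p k) *
      Polynomial.aeval (MvPolynomial.X 0) (l k))
        = ∑ k ∈ range N, MvPolynomial.eval z' (p k) * (l k).eval (z 0) := by
      rw [map_sum]
      refine sum_congr rfl fun k _ => ?_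
      rw [map_mul, MvPolynomial.eval_rename]
      congr 1
      have := Polynomial.aeval_algHom_apply (MvPolynomial.aeval z : MvPolynomial (Fin (d+1)) ℂ →ₐ[ℂ] ℂ)
        (MvPolynomial.X 0) (l k)
      rw [MvPolynomial.aeval_X] at this
      rw [← MvPolynomial.coe_aeval_eq_eval, RingHom.coe_coe, ← this, Polynomial.coe_aeval_eq_eval]
    rw [e1]
    have e2 : (fun j => (r : ℂ) * z j) = Fin.cons (r * z 0) (fun j => r * z' j) := by
      funext j
      refine Fin.cases ?_ (fun i => ?_) j <;> simp [hz']
    rw [e2]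
    have hz'P : (fun j => (r : ℂ) * z' j) ∈ Polydisk d := by
      intro j
      rw [norm_mul, Complex.norm_real, Real.norm_of_nonneg hr0.le]
      nlinarith [norm_nonneg (z' j), hz j.succ]
    have b1 := hg (fun x => f (Fin.cons x (fun j => r * z' j))) (by
      refine hf.comp (t := Polydisk (d + 1))
        (f := fun x : ℂ => (Fin.cons x (fun j => r * z' j) : Fin (d + 1) → ℂ)) ?_ ?_
      · refine Differentiable.differentiableOn ?_
        rw [differentiable_pi]
        intro j
        refine Fin.cases ?_ (fun i => ?_) j
        · simp only [Fin.cons_zero]; fun_prop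
        · simp
      · intro x hx
        exact hcons _ _ (by simpa using hx) hz'P)
      (fun x hx => hC _ (hcons _ _ (by simpa using hx) hz'P)) (z 0) (hz 0)
    have b2 : ‖∑ k ∈ range N, f (Fin.cons (w k) (fun j => r * z' j)) * (l k).eval (z 0)
        - ∑ k ∈ range N, MvPolynomial.eval z' (p k) * (l k).eval (z 0)‖ ≤ ε / 2 := by
      rw [← sum_sub_distrib]
      refine (norm_sum_le _ _).trans ?_
      calc _ ≤ ∑ k ∈ range N, ε / (2 * N) := by
            refine sum_le_sum fun k _ => ?_
            rw [← sub_mul, norm_mul]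
            have := hp k z' (fun j => hz j.succ)
            have h2 := hl k (z 0) (hz 0)
            calc _ ≤ ε / (2 * N) * 1 := by gcongr
              _ = _ := mul_one _
        _ = ε / 2 := by
            rw [sum_const, card_range, nsmul_eq_mul]; field_simp
    calc _ = ‖(f (Fin.cons (r * z 0) (fun j => r * z' j)) -
          ∑ k ∈ range N, f (Fin.cons (w k) (fun j => r * z' j)) * (l k).eval (z 0)) +
          (∑ k ∈ range N, f (Fin.cons (w k) (fun j => r * z' j)) * (l k).eval (z 0)
        - ∑ k ∈ range N, MvPolynomial.eval z' (p k) * (l k).eval (z 0))‖ := by congr 1; ring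
      _ ≤ _ := norm_add_le _ _
      _ ≤ ε / 2 + ε / 2 := add_le_add b1 b2
      _ = ε := by ring


lemma comm_calc {A : Type*} [CommCStarAlgebra A] {d : ℕ} (u : Fin d → A)
    (hu : ∀ j, star (u j) * u j = 1) (p : MvPolynomial (Fin d) ℂ)
    (hp : ∀ z : Fin d → ℂ, (∀ j, ‖z j‖ = 1) → ‖MvPolynomial.eval z p‖ ≤ 1) :
    ‖MvPolynomial.aeval u p‖ ≤ 1 := by
  rw [← (AddMonoidHomClass.isometry_iff_norm (WeakDual.gelfandTransform ℂ A)).mp (gelfandTransform_isometry A),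
    ContinuousMap.norm_le _ zero_le_one]
  intro φ
  rw [WeakDual.gelfandTransform_apply_apply]
  have h1 : φ (MvPolynomial.aeval u p) = MvPolynomial.eval (fun j => φ (u j)) p := by
    have := MvPolynomial.comp_aeval_apply (f := u) (WeakDual.CharacterSpace.toAlgHom φ) p
    exact this
  rw [h1]
  apply hp
  intro j
  have h2 : φ (star (u j) * u j) = 1 := by rw [hu, map_one]
  rw [map_mul, map_star] at h2
  have h3 := congrArg norm h2
  rw [norm_mul, norm_star, norm_one] at h3
  nlinarith [norm_nonneg (φ (u j))]

lemma exists_calc {B : Type*} [CStarAlgebra B] {d : ℕ} (U : Fin d → B)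
    (hU : ∀ j, star (U j) * U j = 1) (hc : ∀ i j, U i * U j = U j * U i)
    (hcs : ∀ i j, U i * star (U j) = star (U j) * U i) :
    ∃ Φ : MvPolynomial (Fin d) ℂ →ₐ[ℂ] B, (∀ j, Φ (MvPolynomial.X j) = U j) ∧
      ∀ p : MvPolynomial (Fin d) ℂ,
        (∀ z : Fin d → ℂ, (∀ j, ‖z j‖ = 1) → ‖MvPolynomial.eval z p‖ ≤ 1) → ‖Φ p‖ ≤ 1 := by
  have hcm : IsMulCommutative (StarAlgebra.adjoin ℂ (Set.range U)) := by
    apply StarAlgebra.isMulCommutative_adjoin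
    · rintro _ ⟨i, rfl⟩ _ ⟨j, rfl⟩; exact hc i j
    · rintro _ ⟨i, rfl⟩ _ ⟨j, rfl⟩; exact hcs i j
  let S : StarSubalgebra ℂ B := (StarAlgebra.adjoin ℂ (Set.range U)).topologicalClosure
  have hcl : IsClosed (S : Set B) := StarSubalgebra.isClosed_topologicalClosure _
  have hmc : ∀ x y : S, x * y = y * x :=
    (StarSubalgebra.commRingTopologicalClosure (StarAlgebra.adjoin ℂ (Set.range U))
      (fun x y => hcm.is_comm.comm x y)).mul_comm
  let i0 : CStarAlgebra S := StarSubalgebra.cstarAlgebra S (h_closed := hcl)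
  let i1 : CommCStarAlgebra S := { i0 with mul_comm := hmc }
  let u : Fin d → S := fun j => ⟨U j, StarSubalgebra.le_topologicalClosure _
    (StarAlgebra.subset_adjoin ℂ _ ⟨j, rfl⟩)⟩
  refine ⟨(S.subtype : S →ₐ[ℂ] B).comp (MvPolynomial.aeval u), ?_, ?_⟩
  · intro j
    simp [u]
  · intro p hp
    exact comm_calc u (fun j => Subtype.ext (hU j)) p hp

/-- The Hilbert space `ℓ²(ℤ^d)`. -/
abbrev SeqSp (d : ℕ) : Type := lp (fun _ : Fin d → ℤ => ℂ) 2

/-- Reindexing of `ℓ²(ℤ^d)` along a permutation of the index set. -/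
noncomputable def permL {d : ℕ} (σ : (Fin d → ℤ) ≃ (Fin d → ℤ)) : SeqSp d →ₗᵢ[ℂ] SeqSp d where
  toFun x := ⟨fun n => x (σ n), by
    have h := lp.memℓp x
    rw [memℓp_gen_iff (by norm_num)] at h
    change Memℓp (fun n => x (σ n)) 2
    rw [memℓp_gen_iff (by norm_num)]
    exact (σ.summable_iff).mpr h⟩
  map_add' x y := by ext n; rfl
  map_smul' c x := by ext n; rfl
  norm_map' x := by
    rw [lp.norm_eq_tsum_rpow (by norm_num), lp.norm_eq_tsum_rpow (by norm_num)]
    congr 1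
    exact σ.tsum_eq (fun n => ‖x n‖ ^ (2 : ENNReal).toReal)

lemma permL_apply {d : ℕ} (σ : (Fin d → ℤ) ≃ (Fin d → ℤ)) (x : SeqSp d) (n : Fin d → ℤ) :
    permL σ x n = x (σ n) := rfl

/-- Reindexing as an isometric equivalence. -/
noncomputable def permE {d : ℕ} (σ : (Fin d → ℤ) ≃ (Fin d → ℤ)) : SeqSp d ≃ₗᵢ[ℂ] SeqSp d :=
  { permL σ with
    invFun := permL σ.symm
    left_inv := fun x => by
      ext n
      change x (σ (σ.symm n)) = x n
      simp
    right_inv := fun x => by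
      ext n
      change x (σ.symm (σ n)) = x n
      simp }

/-- The shift in direction `j`. -/
noncomputable def shf {d : ℕ} (j : Fin d) : SeqSp d →L[ℂ] SeqSp d :=
  ((permE (Equiv.subRight (Pi.single j 1))).toContinuousLinearEquiv : SeqSp d →L[ℂ] SeqSp d)

lemma shf_apply {d : ℕ} (j : Fin d) (x : SeqSp d) (n : Fin d → ℤ) :
    shf j x n = x (n - Pi.single j 1) := rfl

lemma shf_adj_apply {d : ℕ} (j : Fin d) (x : SeqSp d) (n : Fin d → ℤ) :
    ContinuousLinearMap.adjoint (shf j) x n = x (n + Pi.single j 1) := by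
  have : ContinuousLinearMap.adjoint (shf j)
      = ((permE (Equiv.subRight (Pi.single j 1))).symm.toContinuousLinearEquiv : SeqSp d →L[ℂ] SeqSp d) :=
    LinearIsometryEquiv.adjoint_eq_symm (permE (Equiv.subRight (Pi.single j 1)))
  rw [this]
  rfl

lemma shf_adj_norm {d : ℕ} (j : Fin d) (x : SeqSp d) :
    ‖ContinuousLinearMap.adjoint (shf j) x‖ = ‖x‖ := by
  have : ContinuousLinearMap.adjoint (shf j)
      = ((permE (Equiv.subRight (Pi.single j 1))).symm.toContinuousLinearEquiv : SeqSp d →L[ℂ] SeqSp d) :=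
    LinearIsometryEquiv.adjoint_eq_symm (permE (Equiv.subRight (Pi.single j 1)))
  rw [this]
  exact LinearIsometryEquiv.norm_map _ x

lemma shf_adj_shf {d : ℕ} (j : Fin d) (x : SeqSp d) :
    ContinuousLinearMap.adjoint (shf j) (shf j x) = x := by
  ext n
  rw [shf_adj_apply, shf_apply, add_sub_cancel_right]

lemma shf_comm {d : ℕ} (i j : Fin d) : shf i * shf j = shf j * shf i := by
  ext x n
  change shf i (shf j x) n = shf j (shf i x) n
  rw [shf_apply, shf_apply, shf_apply, shf_apply, sub_right_comm]

lemma shf_comm_star {d : ℕ} (i j : Fin d) : shf i * star (shf j) = star (shf j) * shf i := by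
  ext x n
  change shf i (ContinuousLinearMap.adjoint (shf j) x) n = ContinuousLinearMap.adjoint (shf j) (shf i x) n
  rw [shf_apply, shf_adj_apply, shf_adj_apply, shf_apply, sub_add_eq_add_sub]

/-- Sequences supported in `I`. -/
noncomputable def suppSp {d : ℕ} (I : Set (Fin d → ℤ)) : Submodule ℂ (SeqSp d) :=
  (Submodule.span ℂ {y : SeqSp d | ∃ n, n ∉ I ∧ y = lp.single 2 n (1 : ℂ)})ᗮ

noncomputable instance {d : ℕ} (I : Set (Fin d → ℤ)) : (suppSp I).HasOrthogonalProjection := by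
  unfold suppSp; infer_instance

lemma inner_single_one {d : ℕ} (n : Fin d → ℤ) (x : SeqSp d) :
    inner ℂ (lp.single 2 n (1 : ℂ) : SeqSp d) x = x n := by
  rw [lp.inner_single_left]; simp

lemma mem_suppSp {d : ℕ} {I : Set (Fin d → ℤ)} {x : SeqSp d} :
    x ∈ suppSp I ↔ ∀ n, n ∉ I → x n = 0 := by
  unfold suppSp
  constructor
  · intro h n hn
    rw [← inner_single_one]
    exact (Submodule.mem_orthogonal _ _).mp h _ (Submodule.subset_span ⟨n, hn, rfl⟩)
  · intro h
    rw [Submodule.mem_orthogonal]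
    intro u hu
    induction hu using Submodule.span_induction with
    | mem y hy => obtain ⟨n, hn, rfl⟩ := hy; rw [inner_single_one, h n hn]
    | zero => simp
    | add y z _ _ hy hz => rw [inner_add_left, hy, hz, add_zero]
    | smul a y _ hy => rw [inner_smul_left, hy, mul_zero]

lemma inner_zero_of_supp {d : ℕ} {I : Set (Fin d → ℤ)} {x y : SeqSp d} (hx : x ∈ suppSp I)
    (hy : ∀ n ∈ I, y n = 0) : inner ℂ x y = 0 := by
  rw [lp.inner_eq_tsum]
  convert tsum_zero with n
  by_cases hn : n ∈ I
  · rw [hy n hn, inner_zero_right]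
  · rw [mem_suppSp.mp hx n hn, inner_zero_left]

lemma suppSp_mono {d : ℕ} {I J : Set (Fin d → ℤ)} (h : I ⊆ J) : suppSp I ≤ suppSp J := by
  intro x hx
  rw [mem_suppSp] at hx ⊢
  exact fun n hn => hx n fun h' => hn (h h')

lemma suppSp_ortho {d : ℕ} (I J : Set (Fin d → ℤ)) : suppSp I ⟂ suppSp (J \ I) := by
  rw [Submodule.isOrtho_iff_inner_eq]
  intro x hx y hy
  exact inner_zero_of_supp hx fun n hn => mem_suppSp.mp hy n fun h => h.2 hn

lemma suppSp_sup {d : ℕ} {I J : Set (Fin d → ℤ)} (h : I ⊆ J) : suppSp J ≤ suppSp I ⊔ suppSp (J \ I) := by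
  intro x hx
  refine Submodule.mem_sup.mpr ⟨(suppSp I).starProjection x, Submodule.starProjection_apply_mem _ _,
    x - (suppSp I).starProjection x, ?_, by abel⟩
  rw [mem_suppSp]
  intro n hn
  by_cases hI : n ∈ I
  · rw [← inner_single_one]
    refine (Submodule.mem_orthogonal _ _).mp ((suppSp I).sub_starProjection_mem_orthogonal x) _ ?_
    rw [mem_suppSp]
    intro m hm
    have hne : m ≠ n := fun h => hm (h ▸ hI)
    simp [lp.single_apply, hne]
  · have hJ : n ∉ J := fun h => hn ⟨h, hI⟩
    exact mem_suppSp.mp ((suppSp J).sub_mem hx (suppSp_mono h (Submodule.starProjection_apply_mem _ _))) n hJ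

lemma hasSum_mul_aux {α β : Type} (u : α → ℂ) (v : β → ℂ) (a b : ℂ) (hu : HasSum u a) (hv : HasSum v b)
    (hu' : Summable fun n => ‖u n‖) (hv' : Summable fun n => ‖v n‖) :
    HasSum (fun x : α × β => u x.1 * v x.2) (a * b) ∧ Summable (fun x : α × β => ‖u x.1 * v x.2‖) := by
  have h := Summable.mul_norm hu' hv'
  exact ⟨hu.mul hv h.of_norm, h⟩

lemma hasSum_pi_prod : ∀ (d : ℕ) (g : Fin d → ℤ → ℂ) (a : Fin d → ℂ), (∀ j, HasSum (g j) (a j)) →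
    (∀ j, Summable fun n => ‖g j n‖) →
    HasSum (fun n : Fin d → ℤ => ∏ j, g j (n j)) (∏ j, a j) ∧
      Summable (fun n : Fin d → ℤ => ‖∏ j, g j (n j)‖) := by
  intro d
  induction d with
  | zero =>
    intro g a _ _
    simp only [univ_eq_empty, prod_empty]
    constructor
    · exact hasSum_unique (fun _ : Fin 0 → ℤ => (1 : ℂ))
    · exact (hasSum_unique (fun _ : Fin 0 → ℤ => ‖(1 : ℂ)‖)).summable
  | succ d ih =>
    intro g a h hs
    obtain ⟨h1, h2⟩ := ih (fun j => g j.succ) (fun j => a j.succ) (fun j => h j.succ) (fun j => hs j.succ)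
    let e : ℤ × (Fin d → ℤ) ≃ (Fin (d + 1) → ℤ) := Fin.consEquiv (fun _ => ℤ)
    have he : (fun n : Fin (d + 1) → ℤ => ∏ j, g j (n j)) ∘ e
        = fun x : ℤ × (Fin d → ℤ) => g 0 x.1 * ∏ j : Fin d, g j.succ (x.2 j) := by
      funext x
      simp [e, Fin.prod_univ_succ, Fin.consEquiv]
    obtain ⟨hm, hsm⟩ := hasSum_mul_aux (g 0) (fun n : Fin d → ℤ => ∏ j : Fin d, g j.succ (n j)) _ _ (h 0) h1 (hs 0) h2
    constructor
    · rw [← e.hasSum_iff, he, Fin.prod_univ_succ]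
      exact hm
    · rw [← e.summable_iff]
      have : (fun n : Fin (d + 1) → ℤ => ‖∏ j, g j (n j)‖) ∘ e
        = fun x : ℤ × (Fin d → ℤ) => ‖g 0 x.1 * ∏ j : Fin d, g j.succ (x.2 j)‖ := by
        funext x
        exact congrArg norm (congrFun he x)
      rw [this]
      exact hsm

/-- One-sided powers. -/
noncomputable def osp (a : ℂ) (n : ℤ) : ℂ := if 0 ≤ n then a ^ n.toNat else 0

lemma osp_hasSum (a : ℂ) (ha : ‖a‖ < 1) : HasSum (osp a) (1 - a)⁻¹ ∧ Summable (fun n => ‖osp a n‖) := by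
  have hinj : Function.Injective (fun n : ℕ => (n : ℤ)) := Nat.cast_injective
  have hz : ∀ x ∉ Set.range (fun n : ℕ => (n : ℤ)), osp a x = 0 := by
    intro x hx
    unfold osp
    rw [if_neg]
    intro h
    exact hx ⟨x.toNat, by simp [h]⟩
  constructor
  · rw [← hinj.hasSum_iff hz]
    have h2 : (osp a ∘ fun n : ℕ => (n : ℤ)) = fun n => a ^ n := by
      funext n
      simp [osp]
    rw [h2]
    exact hasSum_geometric_of_norm_lt_one ha
  · rw [← hinj.summable_iff (fun x hx => by rw [hz x hx, norm_zero])]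
    convert (summable_geometric_of_lt_one (norm_nonneg a) ha) using 1
    funext n
    simp [osp]

lemma osp_mul (a b : ℂ) (n : ℤ) : osp a n * osp b n = osp (a * b) n := by
  unfold osp
  split_ifs <;> simp [mul_pow]

lemma osp_conj (a : ℂ) (n : ℤ) : (starRingEnd ℂ) (osp a n) = osp ((starRingEnd ℂ) a) n := by
  unfold osp
  split_ifs <;> simp

lemma osp_succ (a : ℂ) (n : ℤ) (hn : 0 ≤ n) : osp a (n + 1) = a * osp a n := by
  obtain ⟨m, rfl⟩ := Int.eq_ofNat_of_zero_le hn
  have : (0 : ℤ) ≤ (m : ℤ) + 1 := by omega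
  have h2 : ((m : ℤ) + 1).toNat = m + 1 := by omega
  simp [osp, this, h2, pow_succ']

lemma kseq_memlp {d : ℕ} (ζ : Fin d → ℂ) (hζ : ζ ∈ Polydisk d) :
    Memℓp (fun n : Fin d → ℤ => ∏ j, osp ((starRingEnd ℂ) (ζ j)) (n j)) 2 := by
  rw [memℓp_gen_iff (by norm_num)]
  have hn : ∀ j, ‖ζ j * (starRingEnd ℂ) (ζ j)‖ < 1 := by
    intro j
    rw [norm_mul, RCLike.norm_conj]
    have := hζ j
    nlinarith [norm_nonneg (ζ j)]
  have h := (hasSum_pi_prod d (fun j => osp (ζ j * (starRingEnd ℂ) (ζ j))) _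
    (fun j => (osp_hasSum _ (hn j)).1) (fun j => (osp_hasSum _ (hn j)).2)).2
  convert h using 1
  funext n
  simp only [ENNReal.toReal_ofNat, Real.rpow_ofNat, ← osp_mul, prod_mul_distrib, ← osp_conj, norm_mul,
    ← map_prod, RCLike.norm_conj, sq]

open Classical in
/-- The Szegő kernel vector. -/
noncomputable def kvec {d : ℕ} (ζ : Fin d → ℂ) : SeqSp d :=
  if h : ζ ∈ Polydisk d then ⟨_, kseq_memlp ζ h⟩ else 0

lemma kvec_apply {d : ℕ} (ζ : Fin d → ℂ) (hζ : ζ ∈ Polydisk d) (n : Fin d → ℤ) :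
    kvec ζ n = ∏ j, osp ((starRingEnd ℂ) (ζ j)) (n j) := by
  unfold kvec
  rw [dif_pos hζ]

lemma kvec_inner {d : ℕ} (z ζ : Fin d → ℂ) (hz : z ∈ Polydisk d) (hζ : ζ ∈ Polydisk d) :
    inner ℂ (kvec z) (kvec ζ) = (∏ j, (1 - z j * (starRingEnd ℂ) (ζ j)))⁻¹ := by
  have hn : ∀ j, ‖z j * (starRingEnd ℂ) (ζ j)‖ < 1 := by
    intro j
    rw [norm_mul, RCLike.norm_conj]
    have := hζ j
    have := hz j
    nlinarith [norm_nonneg (ζ j), norm_nonneg (z j)]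
  have h := (hasSum_pi_prod d (fun j => osp (z j * (starRingEnd ℂ) (ζ j))) _
    (fun j => (osp_hasSum _ (hn j)).1) (fun j => (osp_hasSum _ (hn j)).2)).1
  rw [lp.inner_eq_tsum, ← prod_inv_distrib, ← h.tsum_eq]
  congr 1
  funext n
  rw [kvec_apply z hz, kvec_apply ζ hζ, RCLike.inner_apply, map_prod, ← prod_mul_distrib]
  refine prod_congr rfl fun j _ => ?_
  rw [osp_conj, osp_mul, mul_comm, Complex.conj_conj]

/-- The nonnegative orthant. -/
def orth (d : ℕ) : Set (Fin d → ℤ) := {n | ∀ j, 0 ≤ n j}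

lemma kvec_mem {d : ℕ} (ζ : Fin d → ℂ) (hζ : ζ ∈ Polydisk d) : kvec ζ ∈ suppSp (orth d) := by
  rw [mem_suppSp]
  intro n hn
  rw [kvec_apply ζ hζ]
  simp only [orth, Set.mem_ofPred_eq, not_forall] at hn
  obtain ⟨j, hj⟩ := hn
  exact prod_eq_zero (mem_univ j) (by simp [osp, hj])

lemma kvec_shift {d : ℕ} (ζ : Fin d → ℂ) (hζ : ζ ∈ Polydisk d) (j : Fin d) (n : Fin d → ℤ)
    (hn : n ∈ orth d) : kvec ζ (n + Pi.single j 1) = (starRingEnd ℂ) (ζ j) * kvec ζ n := by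
  rw [kvec_apply ζ hζ, kvec_apply ζ hζ, ← mul_prod_erase _ _ (mem_univ j),
    ← mul_prod_erase _ (fun i => osp ((starRingEnd ℂ) (ζ i)) (n i)) (mem_univ j), ← mul_assoc]
  congr 1
  · rw [Pi.add_apply, Pi.single_eq_same, osp_succ _ _ (hn j)]
  · refine prod_congr rfl fun i hi => ?_
    rw [Pi.add_apply, Pi.single_eq_of_ne (ne_of_mem_erase hi), add_zero]

lemma proj_shift {d : ℕ} (ζ : Fin d → ℂ) (hζ : ζ ∈ Polydisk d) (j : Fin d) :
    (suppSp (orth d)).starProjection (ContinuousLinearMap.adjoint (shf j) (kvec ζ))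
      = (starRingEnd ℂ) (ζ j) • kvec ζ := by
  refine Submodule.eq_starProjection_of_mem_orthogonal (Submodule.smul_mem _ _ (kvec_mem ζ hζ)) ?_
  rw [Submodule.mem_orthogonal]
  intro u hu
  refine inner_zero_of_supp hu fun n hn => ?_
  change ContinuousLinearMap.adjoint (shf j) (kvec ζ) n - (starRingEnd ℂ) (ζ j) * kvec ζ n = 0
  rw [shf_adj_apply, kvec_shift ζ hζ j n hn, sub_self]

lemma shf_mem {d : ℕ} {I : Set (Fin d → ℤ)} (j : Fin d) (h : ∀ n ∈ I, n + Pi.single j 1 ∈ I)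
    (x : SeqSp d) (hx : x ∈ suppSp I) : shf j x ∈ suppSp I := by
  rw [mem_suppSp] at hx ⊢
  intro n hn
  rw [shf_apply]
  refine hx _ fun h' => hn ?_
  simpa using h _ h'

lemma shf_adj_mem {d : ℕ} {I : Set (Fin d → ℤ)} (j : Fin d) (h : ∀ n ∈ I, n - Pi.single j 1 ∈ I)
    (x : SeqSp d) (hx : x ∈ suppSp I) : ContinuousLinearMap.adjoint (shf j) x ∈ suppSp I := by
  rw [mem_suppSp] at hx ⊢
  intro n hn
  rw [shf_adj_apply]
  refine hx _ fun h' => hn ?_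
  simpa using h _ h'

lemma orth_add {d : ℕ} (j : Fin d) (n : Fin d → ℤ) (hn : n ∈ orth d) : n + Pi.single j 1 ∈ orth d := by
  intro i
  have := hn i
  by_cases h : i = j
  · subst h; simp; omega
  · simpa [h] using this

lemma calc_mem {d : ℕ} (Φ : MvPolynomial (Fin d) ℂ →ₐ[ℂ] (SeqSp d →L[ℂ] SeqSp d))
    (hΦ : ∀ j, Φ (MvPolynomial.X j) = shf j) (W : Submodule ℂ (SeqSp d))
    (hW : ∀ j, ∀ x ∈ W, shf j x ∈ W) (p : MvPolynomial (Fin d) ℂ) : ∀ x ∈ W, Φ p x ∈ W := by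
  induction p using MvPolynomial.induction_on with
  | C a =>
    intro x hx
    rw [← MvPolynomial.algebraMap_eq, AlgHom.commutes, Algebra.algebraMap_eq_smul_one]
    exact W.smul_mem a hx
  | add p q hp hq =>
    intro x hx
    rw [map_add]
    exact W.add_mem (hp x hx) (hq x hx)
  | mul_X p j hp =>
    intro x hx
    rw [map_mul, hΦ]
    exact hp _ (hW j x hx)

lemma calc_kvec {d : ℕ} (Φ : MvPolynomial (Fin d) ℂ →ₐ[ℂ] (SeqSp d →L[ℂ] SeqSp d))
    (hΦ : ∀ j, Φ (MvPolynomial.X j) = shf j) (ζ : Fin d → ℂ) (hζ : ζ ∈ Polydisk d)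
    (p : MvPolynomial (Fin d) ℂ) : ∀ x ∈ suppSp (orth d),
      inner ℂ (Φ p x) (kvec ζ) = (starRingEnd ℂ) (MvPolynomial.eval ζ p) * inner ℂ x (kvec ζ) := by
  induction p using MvPolynomial.induction_on with
  | C a =>
    intro x hx
    rw [← MvPolynomial.algebraMap_eq, AlgHom.commutes, Algebra.algebraMap_eq_smul_one,
      MvPolynomial.algebraMap_eq, MvPolynomial.eval_C]
    exact inner_smul_left _ _ _
  | add p q hp hq =>
    intro x hx
    rw [map_add, map_add, map_add, add_mul, ← hp x hx, ← hq x hx]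
    exact inner_add_left _ _ _
  | mul_X p j hp =>
    intro x hx
    have h1 := hp _ (shf_mem j (orth_add j) x hx)
    rw [map_mul, hΦ, map_mul, MvPolynomial.eval_X, map_mul]
    change inner ℂ (Φ p (shf j x)) (kvec ζ) = _
    rw [h1, mul_assoc]
    congr 1
    rw [← ContinuousLinearMap.adjoint_inner_right, ← inner_smul_right, ← sub_eq_zero, ← inner_sub_right]
    refine inner_zero_of_supp hx fun n hn => ?_
    change ContinuousLinearMap.adjoint (shf j) (kvec ζ) n - (starRingEnd ℂ) (ζ j) * kvec ζ n = 0
    rw [shf_adj_apply, kvec_shift ζ hζ j n hn, sub_self]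

lemma proj_calc {d : ℕ} (Φ : MvPolynomial (Fin d) ℂ →ₐ[ℂ] (SeqSp d →L[ℂ] SeqSp d))
    (hΦ : ∀ j, Φ (MvPolynomial.X j) = shf j) (ζ : Fin d → ℂ) (hζ : ζ ∈ Polydisk d)
    (p : MvPolynomial (Fin d) ℂ) :
    (suppSp (orth d)).starProjection (ContinuousLinearMap.adjoint (Φ p) (kvec ζ))
      = (starRingEnd ℂ) (MvPolynomial.eval ζ p) • kvec ζ := by
  refine Submodule.eq_starProjection_of_mem_orthogonal (Submodule.smul_mem _ _ (kvec_mem ζ hζ)) ?_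
  rw [Submodule.mem_orthogonal]
  intro u hu
  rw [inner_sub_right, ContinuousLinearMap.adjoint_inner_right, calc_kvec Φ hΦ ζ hζ p u hu,
    inner_smul_right, sub_self]

lemma gramA {d m : ℕ} (A : SeqSp d →L[ℂ] SeqSp d) (z : Fin m → Fin d → ℂ) (c : Fin m → ℂ) :
    ∑ i, ∑ j, c i * (starRingEnd ℂ) (c j) * inner ℂ (A (kvec (z i))) (A (kvec (z j)))
      = ((‖A (∑ i, (starRingEnd ℂ) (c i) • kvec (z i))‖ ^ 2 : ℝ) : ℂ) := by
  have h := inner_self_eq_norm_sq_to_K (𝕜 := ℂ) (A (∑ i, (starRingEnd ℂ) (c i) • kvec (z i)))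
  rw [Complex.ofReal_pow]
  refine Eq.trans ?_ h
  rw [map_sum, sum_inner]
  refine sum_congr rfl fun i _ => ?_
  rw [inner_sum]
  refine sum_congr rfl fun j _ => ?_
  rw [map_smul, map_smul, inner_smul_left, inner_smul_right, Complex.conj_conj, mul_assoc]

lemma gram_shift {d : ℕ} (A : SeqSp d →L[ℂ] SeqSp d) (j : Fin d) (z ζ : Fin d → ℂ)
    (hz : z ∈ Polydisk d) (hζ : ζ ∈ Polydisk d) :
    (1 - z j * (starRingEnd ℂ) (ζ j)) * inner ℂ (A (kvec z)) (A (kvec ζ))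
      = inner ℂ (A (kvec z)) (A (kvec ζ))
        - inner ℂ ((A * ((suppSp (orth d)).starProjection * ContinuousLinearMap.adjoint (shf j))) (kvec z))
          ((A * ((suppSp (orth d)).starProjection * ContinuousLinearMap.adjoint (shf j))) (kvec ζ)) := by
  have h : ∀ w ∈ Polydisk d,
      (A * ((suppSp (orth d)).starProjection * ContinuousLinearMap.adjoint (shf j))) (kvec w)
        = (starRingEnd ℂ) (w j) • A (kvec w) := by
    intro w hw
    rw [← map_smul, ← proj_shift w hw j]
    rfl
  rw [h z hz, h ζ hζ, inner_smul_left, inner_smul_right, Complex.conj_conj]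
  ring

lemma poly_case (d : ℕ) (S T : Set (Fin d)) (hdisj : ∀ j ∈ S, j ∉ T)
    (p : MvPolynomial (Fin d) ℂ) (hp : ∀ z : Fin d → ℂ, (∀ j, ‖z j‖ = 1) → ‖MvPolynomial.eval z p‖ ≤ 1) :
    ∃ K L : (Fin d → ℂ) → (Fin d → ℂ) → ℂ,
      (∀ z ζ, ‖K z ζ‖ ≤ ‖(kvec z : SeqSp d)‖ * ‖(kvec ζ : SeqSp d)‖) ∧
      IsPSDKernelOn (Polydisk d) K ∧ IsPSDKernelOn (Polydisk d) L ∧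
      (∀ j ∈ S, JContractive d j K) ∧ (∀ k ∈ T, JContractive d k L) ∧
      ∀ z ∈ Polydisk d, ∀ ζ ∈ Polydisk d,
        (1 - MvPolynomial.eval z p * (starRingEnd ℂ) (MvPolynomial.eval ζ p)) /
            ∏ j, (1 - z j * (starRingEnd ℂ) (ζ j)) = K z ζ + L z ζ := by
  obtain ⟨Φ, hΦ, hΦn⟩ := exists_calc (B := SeqSp d →L[ℂ] SeqSp d) (fun j => shf j)
    (fun j => by
      ext x : 1
      exact shf_adj_shf j x) shf_comm shf_comm_star
  set M := Φ p with hMdef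
  have hM : ‖M‖ ≤ 1 := hΦn p hp
  have hcomm : ∀ j, M * shf j = shf j * M := by
    intro j
    rw [hMdef, ← hΦ j, ← map_mul, ← map_mul, mul_comm]
  set J : Set (Fin d → ℤ) := {n | ∀ k ∈ T, 0 ≤ n k} with hJ
  have hIJ : orth d ⊆ J := fun n hn k _ => hn k
  have hJadd : ∀ j, ∀ n ∈ J, n + Pi.single j 1 ∈ J := by
    intro j n hn k hk
    have := hn k hk
    by_cases h : k = j
    · subst h; simp; omega
    · simpa [h] using this
  have hJsub : ∀ j ∈ S, ∀ n ∈ J, n - Pi.single j 1 ∈ J := by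
    intro j hj n hn k hk
    have := hn k hk
    have h : k ≠ j := fun h => hdisj j hj (h ▸ hk)
    simpa [h] using this
  have hEadd : ∀ j ∈ T, ∀ n ∈ J \ orth d, n + Pi.single j 1 ∈ J \ orth d := by
    intro j hj n hn
    refine ⟨hJadd j n hn.1, fun h => hn.2 fun i => ?_⟩
    by_cases hij : i = j
    · subst hij; exact hn.1 i hj
    · have := h i
      simpa [hij] using this
  obtain ⟨N, hN1, hN2, hN3, hN4⟩ := core_s17 M hM (suppSp (orth d)) (suppSp (J \ orth d)) (suppSp J)
    (suppSp_mono hIJ) (suppSp_mono Set.sdiff_subset) (suppSp_ortho _ _) (suppSp_sup hIJ)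
    (calc_mem Φ hΦ _ (fun j => shf_mem j (orth_add j)) p)
    (calc_mem Φ hΦ _ (fun j => shf_mem j (hJadd j)) p)
  set H := suppSp (orth d) with hH
  set R : SeqSp d →L[ℂ] SeqSp d := H.starProjection * ContinuousLinearMap.adjoint M with hR
  have hRk : ∀ z ∈ Polydisk d, R (kvec z) = (starRingEnd ℂ) (MvPolynomial.eval z p) • kvec z :=
    fun z hz => proj_calc Φ hΦ z hz p
  have hv : ∀ (m : ℕ) (z : Fin m → Fin d → ℂ), (∀ i, z i ∈ Polydisk d) → ∀ c : Fin m → ℂ,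
      (∑ i, (starRingEnd ℂ) (c i) • kvec (z i)) ∈ H := fun m z hz c =>
    H.sum_mem fun i _ => H.smul_mem _ (kvec_mem _ (hz i))
  refine ⟨fun z ζ => inner ℂ (N (kvec z)) (N (kvec ζ)),
    fun z ζ => inner ℂ ((1 : SeqSp d →L[ℂ] SeqSp d) (kvec z)) ((1 : SeqSp d →L[ℂ] SeqSp d) (kvec ζ))
      - inner ℂ (R (kvec z)) (R (kvec ζ)) - inner ℂ (N (kvec z)) (N (kvec ζ)), ?_, ?_, ?_, ?_, ?_, ?_⟩
  · intro z ζ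
    exact (norm_inner_le_norm _ _).trans (mul_le_mul (hN1 _) (hN1 _) (norm_nonneg _) (norm_nonneg _))
  · intro m z hz c
    rw [gramA]
    exact Complex.zero_le_real.mpr (by positivity)
  · intro m z hz c
    simp only [mul_sub, sum_sub_distrib]
    rw [gramA, gramA, gramA, ← Complex.ofReal_sub, ← Complex.ofReal_sub]
    refine Complex.zero_le_real.mpr ?_
    have := hN2 _ (hv m z hz c)
    change 0 ≤ ‖∑ i, (starRingEnd ℂ) (c i) • kvec (z i)‖ ^ 2 - ‖H.starProjection (ContinuousLinearMap.adjoint M _)‖ ^ 2 - _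
    linarith
  · intro j hj m z hz c
    have e : ∀ i l, (1 - z i j * (starRingEnd ℂ) (z l j)) * inner ℂ (N (kvec (z i))) (N (kvec (z l))) = _ :=
      fun i l => gram_shift N j (z i) (z l) (hz i) (hz l)
    simp only [e, mul_sub, sum_sub_distrib]
    rw [gramA, gramA, ← Complex.ofReal_sub]
    refine Complex.zero_le_real.mpr ?_
    have := hN3 (shf j) (shf_adj_norm j) (hcomm j) (shf_mem j (orth_add j)) (shf_mem j (hJadd j))
      (shf_adj_mem j (hJsub j hj)) _ (hv m z hz c)
    exact sub_nonneg.mpr this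
  · intro j hj m z hz c
    have e : ∀ (A : SeqSp d →L[ℂ] SeqSp d) i l,
        (1 - z i j * (starRingEnd ℂ) (z l j)) * inner ℂ (A (kvec (z i))) (A (kvec (z l))) = _ :=
      fun A i l => gram_shift A j (z i) (z l) (hz i) (hz l)
    have ms : ∀ i l (x y : ℂ), (1 - z i j * (starRingEnd ℂ) (z l j)) * (x - y)
        = (1 - z i j * (starRingEnd ℂ) (z l j)) * x - (1 - z i j * (starRingEnd ℂ) (z l j)) * y :=
      fun i l x y => mul_sub _ x y
    simp only [ms, e]
    simp only [mul_sub, sum_sub_distrib]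
    simp only [gramA]
    simp only [← Complex.ofReal_sub]
    refine Complex.zero_le_real.mpr ?_
    have := hN4 (shf j) (shf_adj_norm j) (shf_adj_shf j) (hcomm j) (shf_mem j (hEadd j hj)) _ (hv m z hz c)
      _ rfl
    generalize (∑ i, (starRingEnd ℂ) (c i) • kvec (z i)) = v at *
    change 0 ≤ ‖v‖ ^ 2 - ‖H.starProjection (ContinuousLinearMap.adjoint (shf j) v)‖ ^ 2
      - (‖H.starProjection (ContinuousLinearMap.adjoint M v)‖ ^ 2
        - ‖H.starProjection (ContinuousLinearMap.adjoint M (H.starProjection (ContinuousLinearMap.adjoint (shf j) v)))‖ ^ 2)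
      - (‖N v‖ ^ 2 - ‖N (H.starProjection (ContinuousLinearMap.adjoint (shf j) v))‖ ^ 2)
    linarith
  · intro z hz ζ hζ
    simp only []
    rw [hRk z hz, hRk ζ hζ, inner_smul_left, inner_smul_right, Complex.conj_conj]
    change _ = _ + (inner ℂ (kvec z) (kvec ζ) - _ - _)
    rw [kvec_inner z ζ hz hζ]
    ring

lemma psd_limit {γ : Type*} (D : Set γ) (l : Filter ℕ) [l.NeBot] (Kn : ℕ → γ → γ → ℂ) (K : γ → γ → ℂ)
    (h : ∀ n, IsPSDKernelOn D (Kn n))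
    (ht : ∀ z ∈ D, ∀ ζ ∈ D, Filter.Tendsto (fun n => Kn n z ζ) l (nhds (K z ζ))) :
    IsPSDKernelOn D K := by
  intro m z hz c
  have hl : Filter.Tendsto (fun n => ∑ i, ∑ j, c i * (starRingEnd ℂ) (c j) * Kn n (z i) (z j)) l
      (nhds (∑ i, ∑ j, c i * (starRingEnd ℂ) (c j) * K (z i) (z j))) :=
    tendsto_finsetSum _ fun i _ => tendsto_finsetSum _ fun j _ =>
      Filter.Tendsto.const_mul _ (ht _ (hz i) _ (hz j))
  exact ge_of_tendsto' hl fun n => h n m z hz c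

lemma isOpen_Polydisk (d : ℕ) : IsOpen (Polydisk d) := by
  have : Polydisk d = Set.pi Set.univ (fun _ => Metric.ball (0 : ℂ) 1) := by
    ext z
    simp [Polydisk, Set.mem_pi]
  rw [this]
  exact isOpen_set_pi Set.finite_univ fun _ _ => Metric.isOpen_ball

lemma approx_seq (d : ℕ) (f : (Fin d → ℂ) → ℂ) (hf : DifferentiableOn ℂ f (Polydisk d))
    (hb : ∀ z ∈ Polydisk d, ‖f z‖ ≤ 1) :
    ∃ q : ℕ → MvPolynomial (Fin d) ℂ,
      (∀ n, ∀ z : Fin d → ℂ, (∀ j, ‖z j‖ = 1) → ‖MvPolynomial.eval z (q n)‖ ≤ 1) ∧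
      ∀ z ∈ Polydisk d, Filter.Tendsto (fun n => MvPolynomial.eval z (q n)) Filter.atTop (nhds (f z)) := by
  set ε : ℕ → ℝ := fun n => 1 / ((n : ℝ) + 2) with hε
  have hε0 : ∀ n, 0 < ε n := fun n => by positivity
  have hε1 : ∀ n, ε n < 1 := fun n => by
    rw [hε]
    simp only []
    rw [div_lt_one (by positivity)]
    have : (0 : ℝ) ≤ n := Nat.cast_nonneg n
    linarith
  have hεt : Filter.Tendsto ε Filter.atTop (nhds 0) := by
    have h := (tendsto_one_div_add_atTop_nhds_zero_nat (𝕜 := ℝ)).comp (Filter.tendsto_add_atTop_nat 1)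
    refine h.congr fun n => ?_
    simp only [Function.comp_apply, hε]
    push_cast
    ring
  have hex : ∀ n, ∃ p : MvPolynomial (Fin d) ℂ, ∀ z : Fin d → ℂ, (∀ j, ‖z j‖ ≤ 1) →
      ‖f (fun j => ((1 - ε n : ℝ) : ℂ) * z j) - MvPolynomial.eval z p‖ ≤ ε n := fun n =>
    poly_approx d f hf 1 zero_le_one hb (1 - ε n) (by linarith [hε1 n]) (by linarith [hε0 n]) (ε n) (hε0 n)
  choose p hp using hex
  have hin : ∀ n, ∀ z : Fin d → ℂ, (∀ j, ‖z j‖ ≤ 1) →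
      (fun j => ((1 - ε n : ℝ) : ℂ) * z j) ∈ Polydisk d := by
    intro n z hz j
    rw [norm_mul, Complex.norm_real, Real.norm_of_nonneg (by linarith [hε1 n])]
    have := hz j
    have h1 := hε0 n
    have h2 := hε1 n
    nlinarith [norm_nonneg (z j)]
  refine ⟨fun n => MvPolynomial.C (((1 + ε n : ℝ) : ℂ)⁻¹) * p n, ?_, ?_⟩
  · intro n z hz
    have hz' : ∀ j, ‖z j‖ ≤ 1 := fun j => (hz j).le
    have h1 := hp n z hz'
    have h2 := hb _ (hin n z hz')
    have h3 : ‖MvPolynomial.eval z (p n)‖ ≤ 1 + ε n := by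
      have := norm_sub_norm_le (MvPolynomial.eval z (p n)) (f (fun j => ((1 - ε n : ℝ) : ℂ) * z j))
      rw [norm_sub_rev] at this
      linarith
    have h4 : 0 < 1 + ε n := by linarith [hε0 n]
    rw [map_mul, MvPolynomial.eval_C, norm_mul, norm_inv, Complex.norm_real, Real.norm_of_nonneg h4.le,
      inv_mul_le_iff₀ h4, mul_one]
    exact h3
  · intro z hz
    have hz' : ∀ j, ‖z j‖ ≤ 1 := fun j => (hz j).le
    have hεc : Filter.Tendsto (fun n => ((ε n : ℝ) : ℂ)) Filter.atTop (nhds 0) := by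
      have := (Complex.continuous_ofReal.tendsto 0).comp hεt
      rw [Complex.ofReal_zero] at this
      exact this
    have hc : ContinuousAt f z := (hf.differentiableAt ((isOpen_Polydisk d).mem_nhds hz)).continuousAt
    have hrz : Filter.Tendsto (fun n => (fun j => ((1 - ε n : ℝ) : ℂ) * z j)) Filter.atTop (nhds z) := by
      rw [tendsto_pi_nhds]
      intro j
      have := ((tendsto_const_nhds (x := (1 : ℂ))).sub hεc).mul_const (z j)
      simpa using this
    have hfr := hc.tendsto.comp hrz
    have hdiff : Filter.Tendsto (fun n => f (fun j => ((1 - ε n : ℝ) : ℂ) * z j) - MvPolynomial.eval z (p n))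
        Filter.atTop (nhds 0) := squeeze_zero_norm (fun n => hp n z hz') hεt
    have hpz : Filter.Tendsto (fun n => MvPolynomial.eval z (p n)) Filter.atTop (nhds (f z)) := by
      have := hfr.sub hdiff
      simpa using this
    have hs : Filter.Tendsto (fun n => ((1 + ε n : ℝ) : ℂ)⁻¹) Filter.atTop (nhds 1) := by
      have := ((tendsto_const_nhds (x := (1 : ℂ))).add hεc).inv₀ (by simp)
      simpa using this
    have := hs.mul hpz
    simpa using this

theorem pick_kernel_splitting (d : ℕ) (hd : 2 ≤ d)
    (f : (Fin d → ℂ) → ℂ)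
    (hf : DifferentiableOn ℂ f (Polydisk d))
    (hb : ∀ z ∈ Polydisk d, ‖f z‖ ≤ 1)
    (S T : Set (Fin d)) (hST : S ∪ T = Set.univ) (hdisj : S ∩ T = ∅)
    (hS : S ≠ ∅) (hT : T ≠ ∅) :
    ∃ K L : (Fin d → ℂ) → (Fin d → ℂ) → ℂ,
      IsPSDKernelOn (Polydisk d) K ∧ IsPSDKernelOn (Polydisk d) L ∧
      (∀ j ∈ S, JContractive d j K) ∧ (∀ k ∈ T, JContractive d k L) ∧
      ∀ z ∈ Polydisk d, ∀ ζ ∈ Polydisk d,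
        (1 - f z * (starRingEnd ℂ) (f ζ)) /
            ∏ j, (1 - z j * (starRingEnd ℂ) (ζ j)) = K z ζ + L z ζ := by
  have hdisj' : ∀ j ∈ S, j ∉ T := by
    intro j h1 h2
    have : j ∈ S ∩ T := ⟨h1, h2⟩
    rw [hdisj] at this
    exact this
  obtain ⟨q, hq1, hq2⟩ := approx_seq d f hf hb
  choose K L hKb hK hL hKS hLT hKL using fun n => poly_case d S T hdisj' (q n) (hq1 n)
  set u : Ultrafilter ℕ := Filter.hyperfilter ℕ with hu
  have hlim : ∀ z ζ, ∃ a : ℂ, Filter.Tendsto (fun n => K n z ζ) u (nhds a) := by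
    intro z ζ
    obtain ⟨a, _, ha⟩ := (isCompact_closedBall (0 : ℂ) (‖(kvec z : SeqSp d)‖ * ‖(kvec ζ : SeqSp d)‖)).ultrafilter_le_nhds
      (u.map (fun n => K n z ζ)) (by
        rw [Filter.le_principal_iff]
        refine Filter.mem_map.mpr (Filter.univ_mem' fun n => ?_)
        simpa using hKb n z ζ)
    exact ⟨a, ha⟩
  choose K0 hK0 using hlim
  have hq : ∀ z ∈ Polydisk d, Filter.Tendsto (fun n => MvPolynomial.eval z (q n)) u (nhds (f z)) :=
    fun z hz => (hq2 z hz).mono_left Nat.hyperfilter_le_atTop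
  have hL0 : ∀ z ∈ Polydisk d, ∀ ζ ∈ Polydisk d, Filter.Tendsto (fun n => L n z ζ) u
      (nhds ((1 - f z * (starRingEnd ℂ) (f ζ)) / ∏ j, (1 - z j * (starRingEnd ℂ) (ζ j)) - K0 z ζ)) := by
    intro z hz ζ hζ
    have h1 := (((tendsto_const_nhds (x := (1 : ℂ))).sub ((hq z hz).mul
      ((Complex.continuous_conj.tendsto _).comp (hq ζ hζ)))).div_const
        (∏ j, (1 - z j * (starRingEnd ℂ) (ζ j)))).sub (hK0 z ζ)
    refine h1.congr fun n => ?_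
    have := hKL n z hz ζ hζ
    simp only [Function.comp_apply]
    rw [this]
    ring
  refine ⟨K0, fun z ζ => (1 - f z * (starRingEnd ℂ) (f ζ)) / ∏ j, (1 - z j * (starRingEnd ℂ) (ζ j)) - K0 z ζ,
    ?_, ?_, ?_, ?_, ?_⟩
  · exact psd_limit _ u K K0 hK fun z _ ζ _ => hK0 z ζ
  · exact psd_limit _ u L _ hL hL0
  · intro j hj
    exact psd_limit _ u _ _ (fun n => hKS n j hj) fun z _ ζ _ => (hK0 z ζ).const_mul _
  · intro j hj
    exact psd_limit _ u _ _ (fun n => hLT n j hj) fun z hz ζ hζ => (hL0 z hz ζ hζ).const_mul _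
  · intro z hz ζ hζ
    ring
end
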